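/- There exists a real number τ > 0 such that every graph G that is both C₇-free and (complement of C₇)-free satisfies max(α(G), ω(G)) ≥ |G|^τ; that is, {C₇, C̄₇} has the Erdős–Hajnal property. -/

import Mathlib

open SimpleGraph

/-- The independence (stable set) number of a graph: the clique number of the complement. -/
noncomputable def alphaNum {V : Type*} (G : SimpleGraph V) : ℕ := Gᶜ.cliqueNum

/-- The clique number of a graph. -/
noncomputable def omegaNum {V : Type*} (G : SimpleGraph V) : ℕ := G.cliqueNum

/-- κ(G) = α(G)·ω(G). -/
noncomputable def kappaNum {V : Type*} (G : SimpleGraph V) : ℕ := alphaNum G * omegaNum G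

/-!
It suffices to find, in every large enough set `U` of vertices of `G` or of its complement, `q ≥ 2`
pairwise anticomplete subsets of size at least `#U / q ^ d` with `d` fixed: by induction each of
them contains an independent set and a clique whose sizes have a large product, and the independent
sets can be united.

Up to complementation, Rödl's theorem provides a sparse subset of linear size, and a subset `X` of
it that minimises `Δ(X) / |X| ^ 2` is moreover nearly regular. In `X` there are many pairwise
nonadjacent apexes with large private neighbourhoods, and these form blocks such that each vertex
has few neighbours in every other block. If few pairs of blocks are joined by large matchings,
deleting small vertex covers leaves anticomplete sets. Otherwise some central block is joined by
large matchings to many others. If the blocks are very sparse or very dense, excluding induced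
seven-cycles forces neighbourhoods in the central block to propagate along the edges between the
other blocks, which therefore split into anticomplete sets. If every large subset of the blocks is
neither very sparse nor very dense, the container method yields a large random set of vertices of
the central block, with partners in two other blocks, that has no large clique or independent set;
excluding induced seven-cycles then makes a large part of it a cograph, which is impossible.
-/

section

open Finset

universe u

variable {V : Type*} {G : SimpleGraph V}

/-- `G` has no induced cycle of length seven. -/
def C7Free (G : SimpleGraph V) : Prop := ¬ cycleGraph 7 ⊴ G

open scoped Classical in
/-- The neighbours of `v` inside `X`. -/
noncomputable def nbrsIn (G : SimpleGraph V) (X : Finset V) (v : V) : Finset V :=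
  {x ∈ X | G.Adj v x}

/-- `A` and `B` are disjoint and there is no edge of `G` between them. -/
def Anticomplete (G : SimpleGraph V) (A B : Finset V) : Prop :=
  ∀ a ∈ A, ∀ b ∈ B, a ≠ b ∧ ¬ G.Adj a b

/-- The path `x - y - z - w` is an induced subgraph of `G`. -/
structure IsInducedP4 (G : SimpleGraph V) (x y z w : V) : Prop where
  adj_xy : G.Adj x y
  adj_yz : G.Adj y z
  adj_zw : G.Adj z w
  compl_adj_xz : Gᶜ.Adj x z
  compl_adj_yw : Gᶜ.Adj y w
  compl_adj_xw : Gᶜ.Adj x w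

theorem mem_nbrsIn {X : Finset V} {v x : V} : x ∈ nbrsIn G X v ↔ x ∈ X ∧ G.Adj v x := by
  simp [nbrsIn]

theorem nbrsIn_subset {X : Finset V} {v : V} : nbrsIn G X v ⊆ X :=
  fun _ hx => (mem_nbrsIn.1 hx).1

theorem nbrsIn_mono {X Y : Finset V} (h : X ⊆ Y) {v : V} : nbrsIn G X v ⊆ nbrsIn G Y v :=
  fun _ hx => mem_nbrsIn.2 ⟨h (mem_nbrsIn.1 hx).1, (mem_nbrsIn.1 hx).2⟩

theorem C7Free.false_of_adj_iff (hG : C7Free G) (f : Fin 7 → V)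
    (hf : ∀ i j, G.Adj (f i) (f j) ↔ (cycleGraph 7).Adj i j) : False := by
  have eq_of_same_neighbors : ∀ i j : Fin 7,
      (∀ k, (cycleGraph 7).Adj i k ↔ (cycleGraph 7).Adj j k) → i = j := by decide
  refine hG ⟨⟨f, fun i j hij => eq_of_same_neighbors i j fun k => ?_⟩, fun {i j} => hf i j⟩
  rw [← hf, ← hf, hij]

theorem C7Free.false_of_cycle (hG : C7Free G) {a b c d e f g : V}
    (ab : G.Adj a b) (bc : G.Adj b c) (cd : G.Adj c d) (de : G.Adj d e) (ef : G.Adj e f)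
    (fg : G.Adj f g) (ga : G.Adj g a)
    (ac : ¬ G.Adj a c) (ad : ¬ G.Adj a d) (ae : ¬ G.Adj a e) (af : ¬ G.Adj a f)
    (bd : ¬ G.Adj b d) (be : ¬ G.Adj b e) (bf : ¬ G.Adj b f) (bg : ¬ G.Adj b g)
    (ce : ¬ G.Adj c e) (cf : ¬ G.Adj c f) (cg : ¬ G.Adj c g)
    (df : ¬ G.Adj d f) (dg : ¬ G.Adj d g) (eg : ¬ G.Adj e g) : False := by
  have cycle_adj : ∀ i j : Fin 7,
      (cycleGraph 7).Adj i j ↔ j = i + 1 ∨ i = j + 1 := by decide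
  refine hG.false_of_adj_iff ![a, b, c, d, e, f, g] fun i j => ?_
  rw [cycle_adj i j]
  fin_cases i <;> fin_cases j <;> simp_all [G.adj_comm]

theorem cliqueFreeOn_compl {s : Set V} {n : ℕ} : Gᶜ.CliqueFreeOn s n ↔ G.IndepSetFreeOn s n := by
  simp only [CliqueFreeOn, IndepSetFreeOn, isNClique_compl]

theorem card_lt_of_cliqueFreeOn {s : Set V} {n : ℕ} (h : G.CliqueFreeOn s n) {T : Finset V}
    (hTs : (T : Set V) ⊆ s) (hT : G.IsClique (T : Set V)) : #T < n := by
  by_contra! hn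
  obtain ⟨K, hKT, hK⟩ := exists_subset_card_eq hn
  exact h ((coe_subset.2 hKT).trans hTs) ⟨hT.subset (coe_subset.2 hKT), hK⟩

theorem card_lt_of_indepSetFreeOn {s : Set V} {n : ℕ} (h : G.IndepSetFreeOn s n) {T : Finset V}
    (hTs : (T : Set V) ⊆ s) (hT : G.IsIndepSet (T : Set V)) : #T < n :=
  card_lt_of_cliqueFreeOn (cliqueFreeOn_compl.2 h) hTs ((isClique_compl G).2 hT)

theorem exists_isIndepSet_of_card_nbrsIn_le {k : ℕ} :
    ∀ (q : ℕ) (J : Finset V), (∀ j ∈ J, #(nbrsIn G J j) ≤ k) → q * (k + 1) ≤ #J →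
      ∃ T ⊆ J, G.IsNIndepSet q T := by
  classical
  intro q
  induction q with
  | zero => exact fun J _ _ => ⟨∅, by simp, by simp [isNIndepSet_iff]⟩
  | succ q ih =>
    intro J hdeg hq
    obtain ⟨j, hj⟩ : J.Nonempty := by rw [← card_pos]; nlinarith
    set J' := J \ insert j (nbrsIn G J j) with hJ'
    have hJ'J : J' ⊆ J := sdiff_subset
    have card_J : #J ≤ #J' + (k + 1) := by
      have h₁ := hJ' ▸ le_card_sdiff (insert j (nbrsIn G J j)) J
      have h₂ := card_insert_le j (nbrsIn G J j)
      have h₃ := hdeg j hj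
      omega
    obtain ⟨T, hTJ', hT⟩ := ih J'
      (fun x hx => (card_le_card (nbrsIn_mono hJ'J)).trans (hdeg x (hJ'J hx)))
      (by nlinarith)
    have hjT : ∀ x ∈ T, x ≠ j ∧ ¬ G.Adj j x := fun x hx => by
      have := mem_sdiff.1 (hTJ' hx)
      simp only [mem_insert, mem_nbrsIn] at this
      tauto
    refine ⟨insert j T, insert_subset hj (hTJ'.trans hJ'J), ?_,
      by rw [card_insert_of_notMem fun h => (hjT j h).1 rfl, hT.card_eq]⟩
    rw [coe_insert, ← isClique_compl, isClique_insert]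
    exact ⟨(isClique_compl G).2 hT.isIndepSet, fun x hx hjx => ⟨hjx, (hjT x hx).2⟩⟩

theorem exists_le_card_nbrsIn {J : Finset V} {t k : ℕ} (h : G.IndepSetFreeOn J t)
    (hJ : t * k ≤ #J) (hk : 0 < k) : ∃ j ∈ J, k ≤ #(nbrsIn G J j) := by
  by_contra! hdeg
  obtain ⟨T, hTJ, hT⟩ := exists_isIndepSet_of_card_nbrsIn_le (k := k - 1) t J
    (fun j hj => Nat.le_sub_one_of_lt (hdeg j hj)) (by rwa [Nat.sub_add_cancel hk])
  exact h hTJ hT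

/- Choose `s ∈ S` with the most neighbours in `K`, then a non-neighbour `k ∈ K` of `s`, then a
neighbour `s' ∈ S` of `k`; by maximality some neighbour `k' ∈ K` of `s` is not adjacent to `s'`. -/
theorem exists_isInducedP4 {S K : Finset V} (hS : G.IsIndepSet (S : Set V))
    (hK : G.IsClique (K : Set V)) (hKne : K.Nonempty) (hdisj : Disjoint S K)
    (hKS : ∀ k ∈ K, ∃ s ∈ S, G.Adj k s) (hSK : ∀ s ∈ S, ∃ k ∈ K, ¬ G.Adj s k) :
    ∃ x ∈ S, ∃ y ∈ K, ∃ z ∈ K, ∃ w ∈ S, IsInducedP4 G x y z w := by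
  obtain ⟨k₀, hk₀⟩ := hKne
  obtain ⟨s₀, hs₀, -⟩ := hKS k₀ hk₀
  obtain ⟨s, hs, hmax⟩ := exists_max_image S (fun s => #(nbrsIn G K s)) ⟨s₀, hs₀⟩
  obtain ⟨k, hk, hsk⟩ := hSK s hs
  obtain ⟨s', hs', hks'⟩ := hKS k hk
  have not_subset : ¬ nbrsIn G K s ⊆ nbrsIn G K s' := fun hsub =>
    (hmax s' hs').not_gt <| card_lt_card <| (ssubset_iff_of_subset hsub).2
      ⟨k, mem_nbrsIn.2 ⟨hk, hks'.symm⟩, fun h => hsk (mem_nbrsIn.1 h).2⟩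
  obtain ⟨k', hk', hk's'⟩ := Finset.not_subset.1 not_subset
  obtain ⟨hk'K, hsk'⟩ := mem_nbrsIn.1 hk'
  have hss' : s ≠ s' := by rintro rfl; exact hk's' hk'
  have ne_of_mem {x y : V} (hx : x ∈ S) (hy : y ∈ K) : x ≠ y := by
    rintro rfl; exact disjoint_left.1 hdisj hx hy
  refine ⟨s, hs, k', hk'K, k, hk, s', hs', hsk', hK hk'K hk ?_, hks', ⟨ne_of_mem hs hk, hsk⟩,
    ⟨(ne_of_mem hs' hk'K).symm, fun h => hk's' (mem_nbrsIn.2 ⟨hk'K, h.symm⟩)⟩,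
    hss', hS hs hs' hss'⟩
  rintro rfl
  exact hsk hsk'

/- The induction removes a largest independent set of `W`, which meets every largest clique. -/
theorem card_le_mul_of_forall_not_isInducedP4 {a : ℕ} :
    ∀ (b : ℕ) (W : Finset V),
      (∀ x ∈ W, ∀ y ∈ W, ∀ z ∈ W, ∀ w ∈ W, ¬ IsInducedP4 G x y z w) →
      G.IndepSetFreeOn W (a + 1) → G.CliqueFreeOn W (b + 1) → #W ≤ a * b := by
  classical
  intro b
  induction b with
  | zero =>
    intro W _ _ hcl
    have : W = ∅ := eq_empty_of_forall_notMem fun x hx =>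
      hcl (t := {x}) (by simpa using hx) (by simp [isNClique_iff])
    simp [this]
  | succ b ih =>
    intro W hP4 hind hcl
    obtain ⟨S, hS, hSmax⟩ := exists_max_image
      (W.powerset.filter fun T : Finset V => G.IsIndepSet (T : Set V)) card
      ⟨∅, by simp⟩
    simp only [mem_filter, mem_powerset, and_imp] at hS hSmax
    obtain ⟨hSW, hS⟩ := hS
    have hdW : W \ S ⊆ W := sdiff_subset
    suffices hcl' : G.CliqueFreeOn ↑(W \ S) (b + 1) by
      have h₁ := ih (W \ S)
        (fun x hx y hy z hz w hw => hP4 x (hdW hx) y (hdW hy) z (hdW hz) w (hdW hw))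
        (fun T hT => hind (hT.trans (coe_subset.2 hdW))) hcl'
      have h₂ := card_lt_of_indepSetFreeOn hind (coe_subset.2 hSW) hS
      have h₃ := card_sdiff_add_card_eq_card hSW
      nlinarith
    intro K hK hKcl
    have hKW : K ⊆ W := (coe_subset.1 hK).trans hdW
    have hdisj : Disjoint S K := (disjoint_sdiff (s := S)).mono_right (coe_subset.1 hK)
    obtain ⟨x, hx, y, hy, z, hz, w, hw, hxyzw⟩ := exists_isInducedP4 hS hKcl.isClique
      (card_pos.1 (by rw [hKcl.card_eq]; omega)) hdisj
      (fun k hk => by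
        by_contra! hnon
        have h := hSmax (insert k S) (insert_subset (hKW hk) hSW) (by
          rw [coe_insert, ← isClique_compl, isClique_insert]
          exact ⟨(isClique_compl G).2 hS, fun s hs hks => ⟨hks, hnon s hs⟩⟩)
        rw [card_insert_of_notMem (disjoint_right.1 hdisj hk)] at h
        omega)
      (fun s hs => by
        by_contra! hadj
        exact hcl (t := insert s K) (coe_subset.2 (insert_subset (hSW hs) hKW))
          (hKcl.insert hadj))
    exact hP4 x (hSW hx) y (hKW hy) z (hKW hz) w (hSW hw) hxyzw

/-- Every subset of `U` with at least `n` elements has a vertex whose degree inside that subset is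
at least a `1 / p` fraction of its size. -/
def HereditarilyDense (G : SimpleGraph V) (U : Finset V) (n p : ℕ) : Prop :=
  ∀ W ⊆ U, n ≤ #W → ∃ x ∈ W, #W ≤ p * #(nbrsIn G W x)

open scoped Classical in
/-- Every independent subset `T` of `U` has a fingerprint `F ⊆ T` with at most `s` elements such
that `T \ F` lies in a container `C F` which has at most `n` elements and depends on `F` only. -/
def HasContainers (G : SimpleGraph V) (U : Finset V) (s n : ℕ) : Prop :=
  ∃ C : Finset V → Finset V, (∀ F, #(C F) ≤ n) ∧
    ∀ T ⊆ U, G.IsIndepSet (T : Set V) → ∃ F ⊆ T, #F ≤ s ∧ T \ F ⊆ C F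

theorem HereditarilyDense.subset {U W : Finset V} {n p : ℕ} (h : HereditarilyDense G U n p)
    (hWU : W ⊆ U) : HereditarilyDense G W n p :=
  fun X hX => h X (hX.trans hWU)

theorem hasContainers_of_card_le {U : Finset V} {s n : ℕ} (hU : #U ≤ n) :
    HasContainers G U s n :=
  ⟨fun _ => U, fun _ => hU, fun T hT _ => ⟨∅, by simp, by simp, by simpa using hT⟩⟩

open scoped Classical in
theorem HasContainers.branch {U : Finset V} {s n : ℕ} (x : V)
    (h₁ : HasContainers G (U.erase x \ nbrsIn G U x) s n)
    (h₂ : HasContainers G (U.erase x) (s + 1) n) : HasContainers G U (s + 1) n := by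
  obtain ⟨C₁, hC₁, hfp₁⟩ := h₁
  obtain ⟨C₂, hC₂, hfp₂⟩ := h₂
  refine ⟨fun F => if x ∈ F then C₁ (F.erase x) else C₂ F, fun F => ?_, fun T hTU hT => ?_⟩
  · dsimp only
    split_ifs
    exacts [hC₁ _, hC₂ _]
  by_cases hxT : x ∈ T
  · have hsub : T.erase x ⊆ U.erase x \ nbrsIn G U x := fun y hy => by
      rw [mem_erase] at hy
      rw [mem_sdiff, mem_erase, mem_nbrsIn]
      exact ⟨⟨hy.1, hTU hy.2⟩, fun h => hT hxT hy.2 hy.1.symm h.2⟩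
    obtain ⟨F, hFT, hFs, hFC⟩ := hfp₁ (T.erase x) hsub
      (hT.mono (coe_subset.2 (erase_subset x T)))
    have hxF : x ∉ F := fun h => notMem_erase x T (hFT h)
    refine ⟨insert x F, insert_subset hxT (hFT.trans (erase_subset _ _)), ?_, ?_⟩
    · rw [card_insert_of_notMem hxF]
      exact Nat.succ_le_succ hFs
    · simpa only [mem_insert_self, if_true, erase_insert hxF, sdiff_insert, ← erase_sdiff_comm]
        using hFC
  · obtain ⟨F, hFT, hFs, hFC⟩ := hfp₂ T (fun y hy => mem_erase.2 ⟨fun h => hxT (h ▸ hy), hTU hy⟩) hT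
    exact ⟨F, hFT, hFs, by simpa only [if_neg fun h => hxT (hFT h)] using hFC⟩

theorem HereditarilyDense.hasContainers {n p : ℕ} (hp : 0 < p) {U : Finset V} {s : ℕ}
    (hU : HereditarilyDense G U n p) (hs : #U * (p - 1) ^ s < n * p ^ s) :
    HasContainers G U s n := by
  classical
  induction hu : #U using Nat.strong_induction_on generalizing U s with
  | _ u ih =>
  subst hu
  rcases le_or_gt #U n with hUn | hnU
  · exact hasContainers_of_card_le hUn
  obtain ⟨x, hx, hdeg⟩ := hU U subset_rfl hnU.le
  obtain _ | s := s
  · simp at hs; omega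
  have hlt : #(U.erase x) < #U := card_erase_lt_of_mem hx
  have hsub₁ : U.erase x \ nbrsIn G U x ⊆ U.erase x := sdiff_subset
  have hsub₂ : U.erase x ⊆ U := erase_subset _ _
  refine HasContainers.branch x
    (ih _ ((card_le_card hsub₁).trans_lt hlt) (hU.subset (hsub₁.trans hsub₂)) ?_ rfl)
    (ih _ hlt (hU.subset hsub₂) ((Nat.mul_le_mul_right _ hlt.le).trans_lt hs) rfl)
  have hcard : p * #(U.erase x \ nbrsIn G U x) ≤ (p - 1) * #U := by
    have h : #(U.erase x \ nbrsIn G U x) + #(nbrsIn G U x) ≤ #U := by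
      rw [← card_union_of_disjoint sdiff_disjoint]
      exact card_le_card (union_subset (hsub₁.trans hsub₂) nbrsIn_subset)
    obtain ⟨k, rfl⟩ : ∃ k, p = k + 1 := ⟨p - 1, by omega⟩
    simp only [Nat.add_sub_cancel] at *
    nlinarith
  refine Nat.lt_of_mul_lt_mul_left (a := p) ?_
  calc p * (#(U.erase x \ nbrsIn G U x) * (p - 1) ^ s)
      = p * #(U.erase x \ nbrsIn G U x) * (p - 1) ^ s := by ring
    _ ≤ (p - 1) * #U * (p - 1) ^ s := Nat.mul_le_mul_right _ hcard
    _ = #U * (p - 1) ^ (s + 1) := by ring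
    _ < n * p ^ (s + 1) := hs
    _ = p * (n * p ^ s) := by ring

/-- The sequences of `r` not necessarily distinct elements of `M`. -/
abbrev tuples (M : Finset V) (r : ℕ) : Finset (Fin r → V) := Fintype.piFinset fun _ => M

theorem card_tuples (M : Finset V) (r : ℕ) : #(tuples M r) = #M ^ r := by
  simp [Fintype.card_piFinset]

open scoped Classical in
theorem card_filter_forall_mem_le {r n : ℕ} (M : Finset V) (Q : Finset (Fin r))
    (C : (Fin r → V) → Finset V) (hC : ∀ f ∈ tuples M r, #(C f) ≤ n)
    (hdep : ∀ f g, (∀ i ∉ Q, f i = g i) → C f = C g) :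
    #{f ∈ tuples M r | ∀ i ∈ Q, f i ∈ C f} ≤ n ^ #Q * #M ^ (r - #Q) := by
  let restrict (f : Fin r → V) : {i // i ∉ Q} → V := fun i => f i
  set S := {f ∈ tuples M r | ∀ i ∈ Q, f i ∈ C f} with hS
  have card_image : #(S.image restrict) ≤ #M ^ (r - #Q) := by
    have hsub : S.image restrict ⊆ Fintype.piFinset fun _ => M := by
      intro g hg
      obtain ⟨f, hf, rfl⟩ := mem_image.1 hg
      exact Fintype.mem_piFinset.2 fun i => Fintype.mem_piFinset.1 (mem_filter.1 hf).1 i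
    simpa [Fintype.card_piFinset, Fintype.card_subtype_compl] using card_le_card hsub
  have card_fiber : ∀ g ∈ S.image restrict, #{f ∈ S | restrict f = g} ≤ n ^ #Q := by
    intro g hg
    obtain ⟨f₀, hf₀, rfl⟩ := mem_image.1 hg
    have hdet : ∀ f, restrict f = restrict f₀ → C f = C f₀ := fun f hf =>
      hdep f f₀ fun i hi => congrFun hf ⟨i, hi⟩
    calc #{f ∈ S | restrict f = restrict f₀}
        ≤ #(Fintype.piFinset fun _ : Q => C f₀) := by
          refine card_le_card_of_injOn (fun f i => f i) (fun f hf => ?_) fun f hf f' hf' hff' => ?_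
          · simp only [hS, coe_filter, mem_filter, Set.mem_ofPred_eq] at hf
            exact Fintype.mem_piFinset.2 fun i => hdet f hf.2 ▸ hf.1.2 i i.2
          · simp only [coe_filter, Set.mem_ofPred_eq] at hf hf'
            funext i
            by_cases hi : i ∈ Q
            · exact congrFun hff' ⟨i, hi⟩
            · exact congrFun (hf.2.trans hf'.2.symm) ⟨i, hi⟩
      _ ≤ n ^ #Q := by
          simpa [Fintype.card_piFinset] using
            Nat.pow_le_pow_left (hC f₀ (mem_filter.1 hf₀).1) #Q
  calc #S ≤ n ^ #Q * #(S.image restrict) := card_le_mul_card_image _ _ card_fiber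
    _ ≤ n ^ #Q * #M ^ (r - #Q) := Nat.mul_le_mul_left _ card_image

theorem card_filter_card_le_le (r s : ℕ) :
    #{P : Finset (Fin r) | #P ≤ s} ≤ (r + 1) ^ s := by
  have hsub : ({P : Finset (Fin r) | #P ≤ s} : Finset _) ⊆
      (range (s + 1)).biUnion fun k => powersetCard k univ := by
    intro P hP
    simpa [Nat.lt_succ_iff] using hP
  calc #{P : Finset (Fin r) | #P ≤ s}
      ≤ ∑ k ∈ range (s + 1), #(powersetCard k (univ : Finset (Fin r))) :=
        (card_le_card hsub).trans card_biUnion_le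
    _ ≤ ∑ k ∈ range (s + 1), r ^ k * 1 ^ (s - k) * s.choose k := by
        refine sum_le_sum fun k hk => ?_
        rw [card_powersetCard, card_univ, Fintype.card_fin, one_pow, mul_one]
        exact (Nat.choose_le_pow r k).trans
          (Nat.le_mul_of_pos_right _ (Nat.choose_pos (Nat.lt_succ_iff.1 (mem_range.1 hk))))
    _ = (r + 1) ^ s := (add_pow _ _ _).symm

open scoped Classical in
theorem exists_disjoint_index_sets {r s : ℕ} {f : Fin r → V} {T F : Finset V} {C : Finset V}
    (hT : (T : Set V) ⊆ Set.range f) (hTs : 2 * s ≤ #T) (hFT : F ⊆ T) (hFs : #F ≤ s)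
    (hC : T \ F ⊆ C) :
    ∃ P Q : Finset (Fin r), #P ≤ s ∧ #Q = s ∧ Disjoint P Q ∧ P.image f = F ∧
      ∀ i ∈ Q, f i ∈ C := by
  obtain ⟨J, -, hJinj, hJT⟩ := exists_subset_injOn_image_eq_of_surjOn (f := f) (s := Set.univ) T
    (by simpa [Set.SurjOn] using hT)
  set P := {i ∈ J | f i ∈ F} with hP
  have hPF : P.image f = F := by
    ext v
    simp only [hP, mem_image, mem_filter]
    constructor
    · rintro ⟨i, ⟨-, hi⟩, rfl⟩
      exact hi
    · intro hv
      obtain ⟨i, hi, rfl⟩ := mem_image.1 (hJT.symm ▸ hFT hv)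
      exact ⟨i, ⟨hi, hv⟩, rfl⟩
  have hPJ : P ⊆ J := filter_subset _ _
  have hPcard : #P = #F := by
    rw [← hPF, card_image_of_injOn (hJinj.mono (coe_subset.2 hPJ))]
  have hJcard : #J = #T := by rw [← hJT, card_image_of_injOn hJinj]
  obtain ⟨Q, hQ, hQs⟩ := exists_subset_card_eq (s := J \ P) (n := s)
    (by rw [card_sdiff_of_subset hPJ]; omega)
  refine ⟨P, Q, hPcard.trans_le hFs, hQs, disjoint_sdiff.mono_right hQ, hPF, fun i hi => hC ?_⟩
  obtain ⟨hiJ, hiP⟩ := mem_sdiff.1 (hQ hi)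
  exact mem_sdiff.2 ⟨hJT ▸ mem_image_of_mem f hiJ, fun h => hiP (mem_filter.2 ⟨hiJ, h⟩)⟩

open scoped Classical in
theorem HasContainers.card_tuples_not_indepSetFreeOn_le {M : Finset V} {s n : ℕ}
    (hcont : HasContainers G M s n) (r : ℕ) :
    #{f ∈ tuples M r | ¬ G.IndepSetFreeOn (Set.range f) (2 * s)} ≤
      ((r + 1) ^ s * r ^ s) * (n ^ s * #M ^ (r - s)) := by
  obtain ⟨C, hC, hfp⟩ := hcont
  let C' (P Q : Finset (Fin r)) (f : Fin r → V) := if Disjoint P Q then C (P.image f) else ∅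
  let fingerprints : Finset (Finset (Fin r)) := {P | #P ≤ s}
  let indices := fingerprints ×ˢ powersetCard s (univ : Finset (Fin r))
  have hcover : {f ∈ tuples M r | ¬ G.IndepSetFreeOn (Set.range f) (2 * s)} ⊆
      indices.biUnion fun PQ => {f ∈ tuples M r | ∀ i ∈ PQ.2, f i ∈ C' PQ.1 PQ.2 f} := by
    intro f hf
    simp only [mem_filter, IndepSetFreeOn, not_forall, not_not] at hf
    obtain ⟨hfM, T, hTf, hT⟩ := hf
    have hTM : T ⊆ M := fun x hx => by
      obtain ⟨i, rfl⟩ := hTf hx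
      exact Fintype.mem_piFinset.1 hfM i
    obtain ⟨F, hFT, hFs, hFC⟩ := hfp T hTM hT.isIndepSet
    obtain ⟨P, Q, hPs, hQs, hPQ, rfl, hQC⟩ :=
      exists_disjoint_index_sets hTf hT.card_eq.ge hFT hFs hFC
    simp only [mem_biUnion, mem_filter]
    exact ⟨(P, Q), by simp [indices, fingerprints, hPs, hQs], hfM, by simpa [C', hPQ] using hQC⟩
  have hcount : ∀ PQ ∈ indices, #{f ∈ tuples M r | ∀ i ∈ PQ.2, f i ∈ C' PQ.1 PQ.2 f} ≤
      n ^ s * #M ^ (r - s) := by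
    rintro ⟨P, Q⟩ hPQ
    obtain rfl : #Q = s := (mem_powersetCard.1 (mem_product.1 hPQ).2).2
    refine card_filter_forall_mem_le M Q (C' P Q) (fun f _ => ?_) fun f g hfg => ?_
    · dsimp only [C']
      split_ifs <;> simp [hC]
    · dsimp only [C']
      split_ifs with hdisj
      · exact congrArg C (image_congr fun i hi => hfg i (disjoint_left.1 hdisj hi))
      · rfl
  refine ((card_le_card hcover).trans (card_biUnion_le_card_mul _ _ _ hcount)).trans ?_
  refine Nat.mul_le_mul_right _ ?_
  rw [card_product, card_powersetCard, card_univ, Fintype.card_fin]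
  exact Nat.mul_le_mul (card_filter_card_le_le r s) (Nat.choose_le_pow r s)

open scoped Classical in
theorem HasContainers.mul_card_tuples_not_indepSetFreeOn_le {M : Finset V} {s n r k : ℕ}
    (hcont : HasContainers G M s n) (hs : 0 < s) (hsr : s ≤ r)
    (hM : k * (r + 1) ^ 2 * n ≤ #M) :
    k * #{f ∈ tuples M r | ¬ G.IndepSetFreeOn (Set.range f) (2 * s)} ≤ #M ^ r := by
  calc k * #{f ∈ tuples M r | ¬ G.IndepSetFreeOn (Set.range f) (2 * s)}
      ≤ k ^ s * (((r + 1) ^ s * r ^ s) * (n ^ s * #M ^ (r - s))) :=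
        Nat.mul_le_mul (Nat.le_self_pow hs.ne' k) (hcont.card_tuples_not_indepSetFreeOn_le r)
    _ = (k * ((r + 1) * r) * n) ^ s * #M ^ (r - s) := by simp only [mul_pow]; ring
    _ ≤ #M ^ s * #M ^ (r - s) := by
        refine Nat.mul_le_mul_right _ (Nat.pow_le_pow_left (le_trans ?_ hM) _)
        gcongr
        nlinarith
    _ = #M ^ r := by rw [← pow_add, Nat.add_sub_cancel' hsr]

open scoped Classical in
theorem card_tuples_conflict_le {r c : ℕ} (M : Finset V) (conf : V → V → Prop)
    (hc : ∀ w ∈ M, #{x ∈ M | conf w x} ≤ c) (hM : 2 * r ^ 2 * c ≤ #M) (hr : 0 < r) :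
    2 * #{f ∈ tuples M r | ∃ i j, i ≠ j ∧ conf (f i) (f j)} ≤ #M ^ r := by
  have hcover : {f ∈ tuples M r | ∃ i j, i ≠ j ∧ conf (f i) (f j)} ⊆
      (univ : Finset (Fin r)).offDiag.biUnion fun ij =>
        {f ∈ tuples M r | ∀ i ∈ ({ij.2} : Finset (Fin r)), f i ∈ {x ∈ M | conf (f ij.1) x}} := by
    intro f hf
    obtain ⟨hfM, i, j, hij, hconf⟩ := mem_filter.1 hf
    simp only [mem_biUnion, mem_filter, mem_singleton, forall_eq]
    exact ⟨(i, j), by simpa using hij, hfM, Fintype.mem_piFinset.1 hfM j, hconf⟩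
  have hcount : ∀ ij ∈ (univ : Finset (Fin r)).offDiag,
      #{f ∈ tuples M r | ∀ i ∈ ({ij.2} : Finset (Fin r)), f i ∈ {x ∈ M | conf (f ij.1) x}} ≤
        c * #M ^ (r - 1) := by
    rintro ⟨i, j⟩ hij
    have hij : i ≠ j := (mem_offDiag.1 hij).2.2
    simpa using card_filter_forall_mem_le (n := c) M {j} (fun f => {x ∈ M | conf (f i) x})
      (fun f hf => hc _ (Fintype.mem_piFinset.1 hf i))
      (fun f g hfg => by simp only [hfg i (by simpa using hij)])
  calc 2 * #{f ∈ tuples M r | ∃ i j, i ≠ j ∧ conf (f i) (f j)}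
      ≤ 2 * (#(univ : Finset (Fin r)).offDiag * (c * #M ^ (r - 1))) :=
        Nat.mul_le_mul_left _
          ((card_le_card hcover).trans (card_biUnion_le_card_mul _ _ _ hcount))
    _ ≤ 2 * (r ^ 2 * (c * #M ^ (r - 1))) := by
        gcongr
        rw [offDiag_card, card_univ, Fintype.card_fin, sq]
        exact Nat.sub_le _ _
    _ = 2 * r ^ 2 * c * #M ^ (r - 1) := by ring
    _ ≤ #M * #M ^ (r - 1) := Nat.mul_le_mul_right _ hM
    _ = #M ^ r := by rw [← pow_succ', Nat.sub_add_cancel hr]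

open scoped Classical in
theorem exists_conflictFree_sample {ι : Type*} [Fintype ι] [Nonempty ι] {n p s r c : ℕ}
    (M : Finset V) (H : ι → SimpleGraph V) (conf : V → V → Prop) (hrefl : ∀ w, conf w w)
    (hp : 0 < p) (hs₀ : 0 < s) (hsr : s ≤ r) (hdense : ∀ k, HereditarilyDense (H k) M n p)
    (hs : #M * (p - 1) ^ s < n * p ^ s) (hM : 4 * Fintype.card ι * (r + 1) ^ 2 * n ≤ #M)
    (hc : ∀ w ∈ M, #{x ∈ M | conf w x} ≤ c) (hMc : 2 * r ^ 2 * c ≤ #M) :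
    ∃ W ⊆ M, #W = r ∧ (W : Set V).Pairwise (fun w w' => ¬ conf w w') ∧
      ∀ k, (H k).IndepSetFreeOn W (2 * s) := by
  have hpos : 0 < #(tuples M r) := by
    have hn : 0 < n := Nat.pos_of_mul_pos_right ((Nat.zero_le _).trans_lt hs)
    rw [card_tuples]
    exact pow_pos (lt_of_lt_of_le (by positivity) hM) r
  have hconf := card_tuples_conflict_le M conf hc hMc (by omega)
  have hindep := fun k => ((hdense k).hasContainers hp hs).mul_card_tuples_not_indepSetFreeOn_le
    hs₀ hsr hM
  rw [← card_tuples] at hconf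
  simp only [← card_tuples] at hindep
  obtain ⟨f, hf, hfconf, hfindep⟩ : ∃ f ∈ tuples M r, (¬ ∃ i j, i ≠ j ∧ conf (f i) (f j)) ∧
      ∀ k, (H k).IndepSetFreeOn (Set.range f) (2 * s) := by
    by_contra! hbad
    have hcover : tuples M r ⊆ {f ∈ tuples M r | ∃ i j, i ≠ j ∧ conf (f i) (f j)} ∪
        univ.biUnion fun k => {f ∈ tuples M r | ¬ (H k).IndepSetFreeOn (Set.range f) (2 * s)} := by
      intro f hf
      simp only [mem_union, mem_filter, mem_biUnion, mem_univ, true_and, hf]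
      exact or_iff_not_imp_left.2 fun h => hbad f hf (by push Not at h; exact h)
    have hcard := (card_le_card hcover).trans
      ((card_union_le _ _).trans (Nat.add_le_add_left card_biUnion_le _))
    have hsum := sum_le_sum fun k (_ : k ∈ univ) => hindep k
    rw [← mul_sum, sum_const, card_univ, smul_eq_mul, mul_comm 4, mul_assoc] at hsum
    have := Nat.le_of_mul_le_mul_left hsum Fintype.card_pos
    omega
  have hinj : Function.Injective f := fun i j hij => by
    by_contra hne
    exact hfconf ⟨i, j, hne, hij ▸ hrefl _⟩
  have hrange : ((univ.image f : Finset V) : Set V) = Set.range f := by simp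
  refine ⟨univ.image f, ?_, by simp [card_image_of_injective _ hinj], ?_, by rwa [hrange]⟩
  · exact image_subset_iff.2 fun i _ => Fintype.mem_piFinset.1 hf i
  · rw [hrange]
    rintro _ ⟨i, rfl⟩ _ ⟨j, rfl⟩ hne hij
    exact hfconf ⟨i, j, fun h => hne (h ▸ rfl), hij⟩

/-- Triples `(w, φ w, ψ w)` for `w ∈ W` in which `w` is adjacent to `φ w` and `ψ w`, with an apex
`a` adjacent to all `φ w` only and an apex `b` adjacent to all `ψ w` only. Between different
triples, the only possible edges join two elements of `W`, two values of `φ` or two values of `ψ`.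
-/
structure TripleSystem (G : SimpleGraph V) (W : Finset V) (φ ψ : V → V) (a b : V) : Prop where
  adj_left : ∀ w ∈ W, G.Adj w (φ w)
  adj_right : ∀ w ∈ W, G.Adj w (ψ w)
  not_adj_left : ∀ w ∈ W, ∀ w' ∈ W, w ≠ w' → ¬ G.Adj w (φ w')
  not_adj_right : ∀ w ∈ W, ∀ w' ∈ W, w ≠ w' → ¬ G.Adj w (ψ w')
  not_adj_left_right : ∀ w ∈ W, ∀ w' ∈ W, w ≠ w' → ¬ G.Adj (φ w) (ψ w')
  apex_left_adj : ∀ w ∈ W, G.Adj a (φ w)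
  apex_right_adj : ∀ w ∈ W, G.Adj b (ψ w)
  apex_left_not_adj_base : ∀ w ∈ W, ¬ G.Adj a w
  apex_right_not_adj_base : ∀ w ∈ W, ¬ G.Adj b w
  apex_left_not_adj_right : ∀ w ∈ W, ¬ G.Adj a (ψ w)
  apex_right_not_adj_left : ∀ w ∈ W, ¬ G.Adj b (φ w)

namespace TripleSystem

variable {W : Finset V} {φ ψ : V → V} {a b : V}

theorem swap (h : TripleSystem G W φ ψ a b) : TripleSystem G W ψ φ b a where
  adj_left := h.adj_right
  adj_right := h.adj_left
  not_adj_left := h.not_adj_right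
  not_adj_right := h.not_adj_left
  not_adj_left_right w hw w' hw' hne hadj :=
    h.not_adj_left_right w' hw' w hw hne.symm hadj.symm
  apex_left_adj := h.apex_right_adj
  apex_right_adj := h.apex_left_adj
  apex_left_not_adj_base := h.apex_right_not_adj_base
  apex_right_not_adj_base := h.apex_left_not_adj_base
  apex_left_not_adj_right := h.apex_right_not_adj_left
  apex_right_not_adj_left := h.apex_left_not_adj_right

theorem adj_right_right_of_diag (h : TripleSystem G W φ ψ a b) (hG : C7Free G)
    (hdiag : ∀ w ∈ W, G.Adj (φ w) (ψ w)) {x y z : V} (hx : x ∈ W) (hy : y ∈ W) (hz : z ∈ W)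
    (hxz : x ≠ z) (hxy : G.Adj x y) (hyz : G.Adj (φ y) (φ z)) : G.Adj (ψ x) (ψ z) := by
  by_contra hn
  have hxy' := hxy.ne
  have hyz' : y ≠ z := by rintro rfl; exact hyz.ne rfl
  apply hG.false_of_cycle (a := x) (b := y) (c := φ y) (d := φ z) (e := ψ z) (f := b) (g := ψ x)
    <;> grind [TripleSystem, G.adj_comm]

theorem adj_right_right_of_not_diag (h : TripleSystem G W φ ψ a b) (hG : C7Free G)
    (hdiag : ∀ w ∈ W, ¬ G.Adj (φ w) (ψ w)) {x y : V} (hx : x ∈ W) (hy : y ∈ W) (hxy : x ≠ y)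
    (hn : ¬ G.Adj x y) (hφ : G.Adj (φ x) (φ y)) : G.Adj (ψ x) (ψ y) := by
  by_contra hψ
  apply hG.false_of_cycle (a := x) (b := φ x) (c := φ y) (d := y) (e := ψ y) (f := b) (g := ψ x)
    <;> grind [TripleSystem, G.adj_comm]

theorem not_adj_of_not_diag (h : TripleSystem G W φ ψ a b) (hG : C7Free G)
    (hdiag : ∀ w ∈ W, ¬ G.Adj (φ w) (ψ w)) {x y z : V} (hx : x ∈ W) (hy : y ∈ W) (hz : z ∈ W)
    (hxy : x ≠ y) (hyz : y ≠ z) (hnxy : ¬ G.Adj x y) (hnyz : ¬ G.Adj y z)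
    (hφxy : G.Adj (φ x) (φ y)) (hφyz : G.Adj (φ y) (φ z)) : ¬ G.Adj x z := by
  intro hxz
  have hxz' := hxz.ne
  have hψyz := h.adj_right_right_of_not_diag hG hdiag hy hz hyz hnyz hφyz
  apply hG.false_of_cycle (a := x) (b := φ x) (c := φ y) (d := y) (e := ψ y) (f := ψ z) (g := z)
    <;> grind [TripleSystem, G.adj_comm]

theorem adj_left_left_of_isInducedP4 (h : TripleSystem G W φ ψ a b) (hG : C7Free G) {x y z w : V}
    (hx : x ∈ W) (hy : y ∈ W) (hz : z ∈ W) (hw : w ∈ W) (hP4 : IsInducedP4 G x y z w) :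
    G.Adj (φ x) (φ w) := by
  by_contra hφ
  obtain ⟨hxy, hyz, hzw, ⟨hxz', hxz⟩, ⟨hyw', hyw⟩, ⟨hxw', hxw⟩⟩ := hP4
  have hxy' := hxy.ne
  have hzw' := hzw.ne
  apply hG.false_of_cycle (a := x) (b := y) (c := z) (d := w) (e := φ w) (f := a) (g := φ x)
    <;> grind [TripleSystem, G.adj_comm]

/- Two rounds of taking neighbourhoods give `x, y ∈ W` and many common neighbours `z` of `x` in `G`
and of `y` through `φ`; applying the adjacency rule in both directions, these form a clique. -/
theorem false_of_diag (h : TripleSystem G W φ ψ a b) (hG : C7Free G)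
    (hdiag : ∀ w ∈ W, G.Adj (φ w) (ψ w)) {t : ℕ} (ht : 0 < t) (hW : t ^ 3 ≤ #W)
    (hind : G.IndepSetFreeOn W t) (hindφ : (G.comap φ).IndepSetFreeOn W t)
    (hclφ : (G.comap φ)ᶜ.IndepSetFreeOn W t) : False := by
  obtain ⟨x, hx, hdegx⟩ := exists_le_card_nbrsIn (k := t ^ 2) hind
    (by rwa [← pow_succ']) (by positivity)
  have hsub : nbrsIn G W x ⊆ W := nbrsIn_subset
  obtain ⟨y, hy, hdegy⟩ := exists_le_card_nbrsIn (J := nbrsIn G W x) (k := t)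
    (fun T hT => hindφ (hT.trans (coe_subset.2 hsub))) (by rwa [← sq]) ht
  obtain ⟨hyW, hxy⟩ := mem_nbrsIn.1 hy
  set Z := nbrsIn (G.comap φ) (nbrsIn G W x) y with hZ
  have hZ' : ∀ z ∈ Z, z ∈ W ∧ G.Adj x z ∧ G.Adj (φ y) (φ z) := by
    intro z hz
    rw [hZ, mem_nbrsIn, mem_nbrsIn] at hz
    exact ⟨hz.1.1, hz.1.2, hz.2⟩
  have hψ : ∀ z ∈ Z, G.Adj (ψ x) (ψ z) := fun z hz => by
    obtain ⟨hzW, hxz, hyz⟩ := hZ' z hz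
    exact h.adj_right_right_of_diag hG hdiag hx hyW hzW hxz.ne hxy hyz
  have hclique : (G.comap φ).IsClique (Z : Set V) := fun z hz z' hz' hzz' =>
    h.swap.adj_right_right_of_diag hG (fun w hw => (hdiag w hw).symm) (hZ' z hz).1 hx
      (hZ' z' hz').1 hzz' (hZ' z hz).2.1.symm (hψ z' hz')
  exact (card_lt_of_indepSetFreeOn hclφ (fun z hz => (hZ' z hz).1)
    ((isIndepSet_compl _).2 hclique)).not_ge hdegy

/- A large set of base vertices without edges of `G.comap φ` outside `G` induces a cograph. -/
theorem false_of_not_diag (h : TripleSystem G W φ ψ a b) (hG : C7Free G)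
    (hdiag : ∀ w ∈ W, ¬ G.Adj (φ w) (ψ w)) {t : ℕ} (ht : 0 < t) (hW : t ^ 3 ≤ #W)
    (hind : G.IndepSetFreeOn W t) (hcl : G.CliqueFreeOn W t) : False := by
  have hdeg : ∀ y ∈ W, #(nbrsIn (G.comap φ \ G) W y) ≤ t - 1 := fun y hy => by
    have hmem : ∀ x ∈ nbrsIn (G.comap φ \ G) W y,
        x ∈ W ∧ G.Adj (φ y) (φ x) ∧ ¬ G.Adj y x := fun x hx => by
      simpa only [mem_nbrsIn, sdiff_adj, comap_adj] using hx
    refine Nat.le_sub_one_of_lt (card_lt_of_indepSetFreeOn hind (coe_subset.2 nbrsIn_subset) ?_)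
    intro x hx z hz _
    obtain ⟨hxW, hφx, hnx⟩ := hmem x hx
    obtain ⟨hzW, hφz, hnz⟩ := hmem z hz
    exact h.not_adj_of_not_diag hG hdiag hxW hy hzW (by rintro rfl; exact hφx.ne rfl)
      (by rintro rfl; exact hφz.ne rfl) (fun e => hnx e.symm) hnz hφx.symm hφz
  obtain ⟨W', hW', hind'⟩ := exists_isIndepSet_of_card_nbrsIn_le (t ^ 2) W hdeg
    (by rwa [Nat.sub_add_cancel ht, ← pow_succ])
  obtain ⟨k, rfl⟩ : ∃ k, t = k + 1 := ⟨t - 1, by omega⟩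
  have hcard : #W' ≤ k * k := card_le_mul_of_forall_not_isInducedP4 (G := G) k W'
    (fun x hx y hy z hz w hw hP4 =>
      hind'.isIndepSet hx hw hP4.compl_adj_xw.1
        ⟨h.adj_left_left_of_isInducedP4 hG (hW' hx) (hW' hy) (hW' hz) (hW' hw) hP4,
          hP4.compl_adj_xw.2⟩)
    (fun T hT => hind (hT.trans (coe_subset.2 hW')))
    (fun T hT => hcl (hT.trans (coe_subset.2 hW')))
  rw [hind'.card_eq] at hcard
  nlinarith

end TripleSystem

/-- The pairs in `M` are the edges of a matching of `G` between `A` and `B`. -/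
structure IsMatchingBetween (G : SimpleGraph V) (A B : Finset V) (M : Finset (V × V)) : Prop where
  subset : M ⊆ A ×ˢ B
  adj : ∀ e ∈ M, G.Adj e.1 e.2
  injOn_fst : Set.InjOn Prod.fst (M : Set (V × V))
  injOn_snd : Set.InjOn Prod.snd (M : Set (V × V))

/-- There is a matching with at least `l` edges between `A` and `B`. -/
def Linked (G : SimpleGraph V) (A B : Finset V) (l : ℕ) : Prop :=
  ∃ M, IsMatchingBetween G A B M ∧ l ≤ #M

/-- Some `q` of the sets `S i` have pairwise anticomplete subsets with at least `L` vertices. -/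
def HasAnticompleteFamily (G : SimpleGraph V) (S : V → Finset V) (q L : ℕ) : Prop :=
  ∃ (I : Finset V) (T : V → Finset V), #I = q ∧ (∀ i ∈ I, T i ⊆ S i ∧ L ≤ #(T i)) ∧
    (I : Set V).Pairwise fun i j => Anticomplete G (T i) (T j)

/-- A stable set `I` of apexes, each complete to its own block `S i` and with no neighbours in the
other blocks; a vertex of one block has at most `lam` neighbours in any other block. -/
structure BlockSystem (G : SimpleGraph V) (I : Finset V) (S : V → Finset V) (lam : ℕ) : Prop where
  apex_adj : ∀ i ∈ I, ∀ s ∈ S i, G.Adj i s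
  not_adj_apex_apex : ∀ i ∈ I, ∀ j ∈ I, ¬ G.Adj i j
  not_adj_apex : ∀ i ∈ I, ∀ j ∈ I, i ≠ j → ∀ s ∈ S j, ¬ G.Adj i s
  card_nbrsIn_le : ∀ i ∈ I, ∀ j ∈ I, i ≠ j → ∀ s ∈ S j, #(nbrsIn G (S i) s) ≤ lam

/-- The graph whose edges are the pairs of blocks joined by a matching of size at least `l`. -/
def linkGraph (G : SimpleGraph V) (S : V → Finset V) (l : ℕ) : SimpleGraph V :=
  .fromRel fun i j => Linked G (S i) (S j) l

theorem HasAnticompleteFamily.mono {S S' : V → Finset V} {q L : ℕ}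
    (h : HasAnticompleteFamily G S q L) (hS : ∀ i, S i ⊆ S' i) :
    HasAnticompleteFamily G S' q L := by
  obtain ⟨I, T, hI, hT, hanti⟩ := h
  exact ⟨I, T, hI, fun i hi => ⟨(hT i hi).1.trans (hS i), (hT i hi).2⟩, hanti⟩

theorem IsMatchingBetween.mem {A B : Finset V} {M : Finset (V × V)}
    (hM : IsMatchingBetween G A B M) {e : V × V} (he : e ∈ M) : e.1 ∈ A ∧ e.2 ∈ B :=
  mem_product.1 (hM.subset he)

theorem IsMatchingBetween.swap {A B : Finset V} {M : Finset (V × V)}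
    (hM : IsMatchingBetween G A B M) :
    IsMatchingBetween G B A (M.map (Equiv.prodComm V V).toEmbedding) where
  subset e he := by
    obtain ⟨e', he', rfl⟩ := mem_map.1 he
    exact mem_product.2 (hM.mem he').symm
  adj e he := by
    obtain ⟨e', he', rfl⟩ := mem_map.1 he
    exact (hM.adj e' he').symm
  injOn_fst := by
    rw [coe_map]
    rintro _ ⟨e, he, rfl⟩ _ ⟨e', he', rfl⟩ h
    rw [hM.injOn_snd he he' h]
  injOn_snd := by
    rw [coe_map]
    rintro _ ⟨e, he, rfl⟩ _ ⟨e', he', rfl⟩ h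
    rw [hM.injOn_fst he he' h]

theorem Linked.symm {A B : Finset V} {l : ℕ} (h : Linked G A B l) : Linked G B A l := by
  obtain ⟨M, hM, hl⟩ := h
  exact ⟨_, hM.swap, by rwa [card_map]⟩

theorem linkGraph_adj {S : V → Finset V} {l : ℕ} {i j : V} :
    (linkGraph G S l).Adj i j ↔ i ≠ j ∧ Linked G (S i) (S j) l := by
  rw [linkGraph, fromRel_adj, or_iff_left_of_imp Linked.symm]

theorem IsMatchingBetween.exists_forall_notMem {A B : Finset V} {M : Finset (V × V)}
    (hM : IsMatchingBetween G A B M) {k lam : ℕ} (X Y : Fin k → Finset V)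
    (hX : ∀ i, #(X i) ≤ lam) (hY : ∀ i, #(Y i) ≤ lam) (hk : 2 * (k * lam) < #M) :
    ∃ e ∈ M, ∀ i, e.1 ∉ X i ∧ e.2 ∉ Y i := by
  classical
  by_contra! hcover
  have card_biUnion_le {Z : Fin k → Finset V} (hZ : ∀ i, #(Z i) ≤ lam) :
      #(univ.biUnion Z) ≤ k * lam :=
    (card_biUnion_le_card_mul _ _ _ fun i _ => hZ i).trans (by simp)
  have hfst : #{e ∈ M | e.1 ∈ univ.biUnion X} ≤ #(univ.biUnion X) :=
    card_le_card_of_injOn Prod.fst (fun e he => (mem_filter.1 he).2)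
      (hM.injOn_fst.mono (coe_subset.2 (filter_subset _ _)))
  have hsnd : #{e ∈ M | e.2 ∈ univ.biUnion Y} ≤ #(univ.biUnion Y) :=
    card_le_card_of_injOn Prod.snd (fun e he => (mem_filter.1 he).2)
      (hM.injOn_snd.mono (coe_subset.2 (filter_subset _ _)))
  have hsub : M ⊆ {e ∈ M | e.1 ∈ univ.biUnion X} ∪ {e ∈ M | e.2 ∈ univ.biUnion Y} := fun e he => by
    obtain ⟨i, hi⟩ := hcover e he
    simp only [mem_union, mem_filter, mem_biUnion, mem_univ, true_and, he]
    by_cases hX : e.1 ∈ X i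
    exacts [.inl ⟨i, hX⟩, .inr ⟨i, hi hX⟩]
  have := (card_le_card hsub).trans (card_union_le _ _)
  have := card_biUnion_le hX
  have := card_biUnion_le hY
  omega

theorem IsMatchingBetween.insert [DecidableEq V] {A B : Finset V} {M : Finset (V × V)}
    (hM : IsMatchingBetween G A B M) {x y : V} (hx : x ∈ A) (hy : y ∈ B) (hxy : G.Adj x y)
    (hxM : ∀ e ∈ M, e.1 ≠ x) (hyM : ∀ e ∈ M, e.2 ≠ y) :
    IsMatchingBetween G A B (insert (x, y) M) where
  subset := insert_subset (mk_mem_product hx hy) hM.subset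
  adj := by simpa [hxy] using hM.adj
  injOn_fst := by
    rw [coe_insert, Set.injOn_insert fun h => hxM _ h rfl]
    exact ⟨hM.injOn_fst, by rintro ⟨e, he, h⟩; exact hxM e he h⟩
  injOn_snd := by
    rw [coe_insert, Set.injOn_insert fun h => hxM _ h rfl]
    exact ⟨hM.injOn_snd, by rintro ⟨e, he, h⟩; exact hyM e he h⟩

/- The endpoints of a maximum matching form such a cover. -/
theorem exists_cover_of_not_linked {A B : Finset V} {l : ℕ} (h : ¬ Linked G A B l) :
    ∃ X Y : Finset V, #X ≤ l ∧ #Y ≤ l ∧ ∀ x ∈ A, ∀ y ∈ B, x ∉ X → y ∉ Y → ¬ G.Adj x y := by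
  classical
  obtain ⟨M, hM, hmax⟩ := exists_max_image {M ∈ (A ×ˢ B).powerset | IsMatchingBetween G A B M}
    card ⟨∅, by simp only [mem_filter, empty_mem_powerset, true_and]; constructor <;> simp⟩
  simp only [mem_filter, mem_powerset, and_imp] at hM hmax
  have hlt : #M < l := by
    by_contra! hc
    exact h ⟨M, hM.2, hc⟩
  refine ⟨M.image Prod.fst, M.image Prod.snd, card_image_le.trans hlt.le,
    card_image_le.trans hlt.le, fun x hx y hy hxM hyM hxy => ?_⟩
  have hxM : ∀ e ∈ M, e.1 ≠ x := fun e he h => hxM (h ▸ mem_image_of_mem _ he)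
  have hyM : ∀ e ∈ M, e.2 ≠ y := fun e he h => hyM (h ▸ mem_image_of_mem _ he)
  have hinsert := hM.2.insert hx hy hxy hxM hyM
  have := hmax _ hinsert.subset hinsert
  rw [card_insert_of_notMem fun h => hxM _ h rfl] at this
  omega

theorem exists_min_color_set {ι α : Type*} [DecidableEq α] {χ : V → α} {P : Finset ι}
    (hP : P.Nonempty) {Y : ι → Finset V} {a b : ℕ} (ha : ∀ i ∈ P, ∀ x, #{s ∈ Y i | χ s = x} ≤ a)
    (hb : ∀ i ∈ P, b ≤ #(Y i)) :
    ∃ E : Finset α, (∃ i ∈ P, b ≤ #{s ∈ Y i | χ s ∈ E}) ∧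
      ∀ i ∈ P, #{s ∈ Y i | χ s ∈ E} ≤ b + a := by
  classical
  obtain ⟨i₀, hi₀⟩ := hP
  obtain ⟨E, hE, hmin⟩ := exists_min_image
    {E ∈ ((Y i₀).image χ).powerset | ∃ i ∈ P, b ≤ #{s ∈ Y i | χ s ∈ E}} card
    ⟨(Y i₀).image χ, mem_filter.2 ⟨mem_powerset_self _, i₀, hi₀,
      (hb i₀ hi₀).trans (card_le_card fun s hs => by
        simpa only [mem_filter, hs, true_and] using mem_image_of_mem χ hs)⟩⟩
  simp only [mem_filter, mem_powerset, and_imp, forall_exists_index] at hE hmin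
  refine ⟨E, hE.2, fun j hj => ?_⟩
  obtain rfl | ⟨x, hx⟩ := E.eq_empty_or_nonempty
  · simp
  by_contra! hlarge
  have hsub : {s ∈ Y j | χ s ∈ E} ⊆ {s ∈ Y j | χ s ∈ E.erase x} ∪ {s ∈ Y j | χ s = x} := by
    grind
  have := (card_le_card hsub).trans (card_union_le _ _)
  have := ha j hj x
  have := hmin (E.erase x) ((erase_subset _ _).trans hE.1) j hj (by omega)
  have := card_erase_lt_of_mem hx
  omega

theorem exists_subsets_of_distinct_colors {ι α : Type*} {χ : V → α} {a b : ℕ} :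
    ∀ {p : ℕ} {P : Finset ι} {Y : ι → Finset V}, #P = p →
      (∀ i ∈ P, ∀ x, ∀ Z ⊆ Y i, (∀ s ∈ Z, χ s = x) → #Z ≤ a) → (∀ i ∈ P, p * (b + a) ≤ #(Y i)) →
      ∃ Z : ι → Finset V, (∀ i ∈ P, Z i ⊆ Y i ∧ b ≤ #(Z i)) ∧
        (P : Set ι).Pairwise fun i j => ∀ s ∈ Z i, ∀ t ∈ Z j, χ s ≠ χ t := by
  classical
  intro p
  induction p with
  | zero =>
    intro P Y hP _ _
    simp [card_eq_zero.1 hP]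
  | succ p ih =>
    intro P Y hP ha hb
    obtain ⟨E, ⟨i, hi, hEi⟩, hE⟩ := exists_min_color_set (χ := χ) (b := b) (Y := Y)
      (card_pos.1 (by omega))
      (fun i hi x => ha i hi x _ (filter_subset _ _) fun s hs => (mem_filter.1 hs).2)
      (fun i hi => le_trans (by nlinarith) (hb i hi))
    obtain ⟨Z, hZ, hdisj⟩ := ih (P := P.erase i) (Y := fun j => {s ∈ Y j | χ s ∉ E})
      (by rw [card_erase_of_mem hi, hP, Nat.add_sub_cancel])
      (fun j hj x Z hZ => ha j (mem_of_mem_erase hj) x Z (hZ.trans (filter_subset _ _)))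
      (fun j hj => by
        have h₁ := card_filter_add_card_filter_not (s := Y j) (fun s => χ s ∈ E)
        have h₂ := hE j (mem_of_mem_erase hj)
        have h₃ := hb j (mem_of_mem_erase hj)
        rw [add_mul, one_mul] at h₃
        omega)
    have color_notMem {j s} (hj : j ∈ P) (hji : j ≠ i) (hs : s ∈ Z j) : χ s ∉ E :=
      (mem_filter.1 ((hZ j (mem_erase.2 ⟨hji, hj⟩)).1 hs)).2
    refine ⟨Function.update Z i {s ∈ Y i | χ s ∈ E}, fun j hj => ?_, fun j hj k hk hjk => ?_⟩
    · by_cases hji : j = i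
      · subst hji
        simpa using hEi
      · have := hZ j (mem_erase.2 ⟨hji, hj⟩)
        simpa [hji] using ⟨this.1.trans (filter_subset _ _), this.2⟩
    · have := @hdisj j
      grind

namespace BlockSystem

variable {I : Finset V} {S : V → Finset V} {lam : ℕ}

theorem mono (h : BlockSystem G I S lam) {J : Finset V} (hJ : J ⊆ I) {S' : V → Finset V}
    (hS : ∀ i ∈ J, S' i ⊆ S i) {lam' : ℕ} (hlam : lam ≤ lam') : BlockSystem G J S' lam' where
  apex_adj i hi s hs := h.apex_adj i (hJ hi) s (hS i hi hs)
  not_adj_apex_apex i hi j hj := h.not_adj_apex_apex i (hJ hi) j (hJ hj)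
  not_adj_apex i hi j hj hij s hs := h.not_adj_apex i (hJ hi) j (hJ hj) hij s (hS j hj hs)
  card_nbrsIn_le i hi j hj hij s hs := ((card_le_card (nbrsIn_mono (hS i hi))).trans
    (h.card_nbrsIn_le i (hJ hi) j (hJ hj) hij s (hS j hj hs))).trans hlam

theorem ne (h : BlockSystem G I S lam) {i j s t : V} (hi : i ∈ I) (hj : j ∈ I) (hij : i ≠ j)
    (hs : s ∈ S i) (ht : t ∈ S j) : s ≠ t := by
  rintro rfl
  exact h.not_adj_apex i hi j hj hij s ht (h.apex_adj i hi s hs)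

theorem hasAnticompleteFamily_of_isNIndepSet_linkGraph (h : BlockSystem G I S lam) {q L N l : ℕ}
    (hN : ∀ i ∈ I, N ≤ #(S i)) (hqL : 2 * q * l + L ≤ N) {J : Finset V} (hJ : J ⊆ I)
    (hJl : (linkGraph G S l).IsNIndepSet q J) : HasAnticompleteFamily G S q L := by
  classical
  obtain ⟨hJl, hJq⟩ := hJl
  have exists_cover : ∀ i j, ∃ X Y : Finset V, #X ≤ l ∧ #Y ≤ l ∧ (i ∈ J → j ∈ J → i ≠ j →
      ∀ x ∈ S i, ∀ y ∈ S j, x ∉ X → y ∉ Y → ¬ G.Adj x y) := by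
    intro i j
    by_cases hij : i ∈ J ∧ j ∈ J ∧ i ≠ j
    · have hlink : ¬ Linked G (S i) (S j) l := fun hlink =>
        hJl hij.1 hij.2.1 hij.2.2 (linkGraph_adj.2 ⟨hij.2.2, hlink⟩)
      obtain ⟨X, Y, hX, hY, hXY⟩ := exists_cover_of_not_linked hlink
      exact ⟨X, Y, hX, hY, fun _ _ _ => hXY⟩
    · exact ⟨∅, ∅, by simp, by simp, fun hi hj hne => absurd ⟨hi, hj, hne⟩ hij⟩
  choose X Y hX hY hXY using exists_cover
  refine ⟨J, fun i => S i \ J.biUnion fun j => X i j ∪ Y j i, hJq,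
    fun i hi => ⟨sdiff_subset, ?_⟩, fun i hi j hj hij x hx y hy => ?_⟩
  · have hcard : #(J.biUnion fun j => X i j ∪ Y j i) ≤ #J * (2 * l) :=
      card_biUnion_le_card_mul _ _ _ fun j _ => (card_union_le _ _).trans
        (by have := hX i j; have := hY j i; omega)
    have := le_card_sdiff (J.biUnion fun j => X i j ∪ Y j i) (S i)
    simp only
    have := hN i (hJ hi)
    have : #J * (2 * l) = 2 * q * l := by rw [hJq]; ring
    omega
  · simp only [mem_sdiff, mem_biUnion, mem_union, not_exists, not_and, not_or] at hx hy
    exact ⟨h.ne (hJ hi) (hJ hj) hij hx.1 hy.1,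
      hXY i j hi hj hij x hx.1 y hy.1 (hx.2 j hj).1 (hy.2 i hi).2⟩

theorem exists_forall_linked (h : BlockSystem G I S lam) {q L N k l : ℕ}
    (hanti : ¬ HasAnticompleteFamily G S q L) (hN : ∀ i ∈ I, N ≤ #(S i))
    (hqL : 2 * q * l + L ≤ N) {J : Finset V} (hJ : J ⊆ I) (hJk : q * k ≤ #J) (hk : 0 < k) :
    ∃ c ∈ J, ∃ K ⊆ J, c ∉ K ∧ #K = k ∧ ∀ i ∈ K, Linked G (S c) (S i) l := by
  obtain ⟨c, hc, hck⟩ := exists_le_card_nbrsIn (G := linkGraph G S l) (t := q)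
    (fun T hT hTl => hanti <| h.hasAnticompleteFamily_of_isNIndepSet_linkGraph hN hqL
      ((coe_subset.1 hT).trans hJ) hTl) hJk hk
  obtain ⟨K, hK, hKk⟩ := exists_subset_card_eq hck
  have hK' : ∀ i ∈ K, c ≠ i ∧ Linked G (S c) (S i) l :=
    fun i hi => linkGraph_adj.1 (mem_nbrsIn.1 (hK hi)).2
  exact ⟨c, hc, K, hK.trans nbrsIn_subset, fun hcK => (hK' c hcK).1 rfl, hKk,
    fun i hi => (hK' i hi).2⟩

/- Colour the vertices of the blocks in `K` by their neighbourhoods in `S c`: by propagation,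
edges join vertices of the same colour. -/
theorem hasAnticompleteFamily_of_propagation (h : BlockSystem G I S lam) {q L l : ℕ} {c : V}
    (hc : c ∈ I) {K : Finset V} (hK : K ⊆ I) (hcK : c ∉ K) (hKq : #K = q)
    (hlink : ∀ i ∈ K, Linked G (S c) (S i) l) (hl : q * (L + lam) ≤ l)
    (hprop : ∀ i ∈ K, ∀ j ∈ K, i ≠ j → ∀ s ∈ S i, ∀ t ∈ S j, G.Adj s t →
      nbrsIn G (S c) s ⊆ nbrsIn G (S c) t) : HasAnticompleteFamily G S q L := by
  classical
  set Y : V → Finset V := fun i => {s ∈ S i | (nbrsIn G (S c) s).Nonempty} with hY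
  have hYS i : Y i ⊆ S i := filter_subset _ _
  have card_Y : ∀ i ∈ K, q * (L + lam) ≤ #(Y i) := by
    intro i hi
    obtain ⟨M, hM, hMl⟩ := hlink i hi
    refine hl.trans (hMl.trans (card_le_card_of_injOn Prod.snd (fun e he => ?_) hM.injOn_snd))
    obtain ⟨hec, hei⟩ := hM.mem he
    exact mem_filter.2 ⟨hei, e.1, mem_nbrsIn.2 ⟨hec, (hM.adj e he).symm⟩⟩
  have card_color_le : ∀ i ∈ K, ∀ F, ∀ Z ⊆ Y i, (∀ s ∈ Z, nbrsIn G (S c) s = F) → #Z ≤ lam := by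
    intro i hi F Z hZ hF
    obtain rfl | ⟨s, hs⟩ := Z.eq_empty_or_nonempty
    · simp
    obtain ⟨u, hu⟩ := (mem_filter.1 (hZ hs)).2
    refine (card_le_card fun t ht => ?_).trans (h.card_nbrsIn_le i (hK hi) c hc
      (by rintro rfl; exact hcK hi) u (mem_nbrsIn.1 hu).1)
    rw [hF s hs, ← hF t ht] at hu
    exact mem_nbrsIn.2 ⟨hYS i (hZ ht), (mem_nbrsIn.1 hu).2.symm⟩
  obtain ⟨Z, hZ, hcolor⟩ := exists_subsets_of_distinct_colors hKq card_color_le card_Y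
  refine ⟨K, Z, hKq, fun i hi => ⟨(hZ i hi).1.trans (hYS i), (hZ i hi).2⟩,
    fun i hi j hj hij s hs t ht => ?_⟩
  have hsS := hYS i ((hZ i hi).1 hs)
  have htS := hYS j ((hZ j hj).1 ht)
  exact ⟨h.ne (hK hi) (hK hj) hij hsS htS, fun hst => hcolor hi hj hij s hs t ht <|
    (hprop i hi j hj hij s hsS t htS hst).antisymm
      (hprop j hj i hi hij.symm t htS s hsS hst.symm)⟩

theorem nbrsIn_subset_of_sparse (h : BlockSystem G I S lam) (hG : C7Free G) {c k j : V}
    (hc : c ∈ I) (hk : k ∈ I) (hj : j ∈ I) (hck : c ≠ k) (hcj : c ≠ j) (hkj : k ≠ j) {l : ℕ}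
    (hsparse : ∀ i ∈ I, ∀ s ∈ S i, #(nbrsIn G (S i) s) ≤ lam)
    (hlink : Linked G (S c) (S j) l) (hl : 6 * lam < l) {s t : V} (hs : s ∈ S k) (ht : t ∈ S j)
    (hst : G.Adj s t) : nbrsIn G (S c) s ⊆ nbrsIn G (S c) t := by
  intro u hu
  obtain ⟨huc, hsu⟩ := mem_nbrsIn.1 hu
  rw [mem_nbrsIn]
  by_contra! hut
  replace hut := hut huc
  obtain ⟨M, hM, hMl⟩ := hlink
  have card_le : ∀ i ∈ I, ∀ m : Fin 3, #(![nbrsIn G (S i) u, nbrsIn G (S i) s,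
      nbrsIn G (S i) t] m) ≤ lam := by
    have hdeg : ∀ i ∈ I, ∀ j ∈ I, ∀ s ∈ S j, #(nbrsIn G (S i) s) ≤ lam := fun i hi j hj s hs => by
      by_cases hij : i = j
      exacts [hij ▸ hsparse j hj s hs, h.card_nbrsIn_le i hi j hj hij s hs]
    intro i hi m
    fin_cases m
    exacts [hdeg i hi c hc u huc, hdeg i hi k hk s hs, hdeg i hi j hj t ht]
  obtain ⟨⟨y, z⟩, he, havoid⟩ := hM.exists_forall_notMem _ _ (card_le c hc) (card_le j hj)
    (by omega)
  obtain ⟨hyc, hzj⟩ := hM.mem he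
  have hyz := hM.adj _ he
  simp only [Fin.forall_fin_succ, Matrix.cons_val_zero, Matrix.cons_val_succ, mem_nbrsIn, hyc,
    hzj, true_and] at havoid
  apply hG.false_of_cycle (a := c) (b := u) (c := s) (d := t) (e := j) (f := z) (g := y)
    <;> grind [BlockSystem, G.adj_comm]

theorem nbrsIn_subset_of_dense (h : BlockSystem G I S lam) (hG : C7Free G) {c k l j : V}
    (hc : c ∈ I) (hk : k ∈ I) (hl : l ∈ I) (hj : j ∈ I) (hck : c ≠ k) (hcl : c ≠ l) (hkl : k ≠ l)
    (hjc : j ≠ c) (hjk : j ≠ k) (hjl : j ≠ l) {m : ℕ}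
    (hdense : ∀ i ∈ I, ∀ s ∈ S i, #(nbrsIn Gᶜ (S i) s) ≤ lam)
    (hlinkc : Linked G (S j) (S c) m) (hlinkl : Linked G (S j) (S l) m) (hm : 10 * lam < m)
    {s t : V} (hs : s ∈ S k) (ht : t ∈ S l) (hst : G.Adj s t) :
    nbrsIn G (S c) s ⊆ nbrsIn G (S c) t := by
  intro u hu
  obtain ⟨huc, hsu⟩ := mem_nbrsIn.1 hu
  rw [mem_nbrsIn]
  by_contra! hut
  replace hut := hut huc
  have cross {i j s} (hi : i ∈ I) (hj : j ∈ I) (hij : i ≠ j) (hs : s ∈ S j) :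
      #(nbrsIn G (S i) s) ≤ lam := h.card_nbrsIn_le i hi j hj hij s hs
  obtain ⟨M, hM, hMm⟩ := hlinkc
  obtain ⟨⟨y, y'⟩, he, hy⟩ := hM.exists_forall_notMem (lam := lam)
    ![nbrsIn G (S j) s, nbrsIn G (S j) t, nbrsIn G (S j) u]
    ![nbrsIn Gᶜ (S c) u, nbrsIn G (S c) s, nbrsIn G (S c) t]
    (by
      intro i
      fin_cases i
      exacts [cross hj hk hjk hs, cross hj hl hjl ht, cross hj hc hjc huc])
    (by
      intro i
      fin_cases i
      exacts [hdense c hc u huc, cross hc hk hck hs, cross hc hl hcl ht]) (by omega)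
  obtain ⟨hyj, hyc⟩ := hM.mem he
  have hyy := hM.adj _ he
  obtain ⟨M', hM', hMm'⟩ := hlinkl
  obtain ⟨⟨z, z'⟩, he', hz⟩ := hM'.exists_forall_notMem (lam := lam)
    ![nbrsIn Gᶜ (S j) y, nbrsIn G (S j) s, nbrsIn G (S j) u, nbrsIn G (S j) y', nbrsIn G (S j) t]
    ![nbrsIn Gᶜ (S l) t, nbrsIn G (S l) s, nbrsIn G (S l) u, nbrsIn G (S l) y', nbrsIn G (S l) y]
    (by
      intro i
      fin_cases i
      exacts [hdense j hj y hyj, cross hj hk hjk hs, cross hj hc hjc huc, cross hj hc hjc hyc,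
        cross hj hl hjl ht])
    (by
      intro i
      fin_cases i
      exacts [hdense l hl t ht, cross hl hk hkl.symm hs, cross hl hc hcl.symm huc,
        cross hl hc hcl.symm hyc, cross hl hj hjl.symm hyj]) (by omega)
  obtain ⟨hzj, hzl⟩ := hM'.mem he'
  have hzz := hM'.adj _ he'
  simp only [Fin.forall_fin_succ, Matrix.cons_val_zero, Matrix.cons_val_succ, mem_nbrsIn,
    compl_adj, hyj, hyc, hzj, hzl, true_and] at hy hz
  apply hG.false_of_cycle (a := s) (b := u) (c := y') (d := y) (e := z) (f := z') (g := t)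
    <;> grind [G.adj_comm]

theorem hasAnticompleteFamily_of_sparse (h : BlockSystem G I S lam) (hG : C7Free G)
    {q L N l : ℕ} (hq : 0 < q) (hI : q * q ≤ #I) (hN : ∀ i ∈ I, N ≤ #(S i))
    (hqL : 2 * q * l + L ≤ N) (hsparse : ∀ i ∈ I, ∀ s ∈ S i, #(nbrsIn G (S i) s) ≤ lam)
    (hl : q * (L + lam) ≤ l) (hl6 : 6 * lam < l) : HasAnticompleteFamily G S q L := by
  by_contra hanti
  obtain ⟨c, hc, K, hK, hcK, hKq, hlink⟩ := h.exists_forall_linked hanti hN hqL subset_rfl hI hq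
  refine hanti <| h.hasAnticompleteFamily_of_propagation hc hK hcK hKq hlink hl
    fun k hk j hj hkj s hs t ht hst => ?_
  exact h.nbrsIn_subset_of_sparse hG hc (hK hk) (hK hj) (ne_of_mem_of_not_mem hk hcK).symm
    (ne_of_mem_of_not_mem hj hcK).symm hkj hsparse (hlink j hj) hl6 hs ht hst

theorem hasAnticompleteFamily_of_dense (h : BlockSystem G I S lam) (hG : C7Free G)
    {q L N l : ℕ} (hq : 0 < q) (hI : q * (q * q) ≤ #I) (hN : ∀ i ∈ I, N ≤ #(S i))
    (hqL : 2 * q * l + L ≤ N) (hdense : ∀ i ∈ I, ∀ s ∈ S i, #(nbrsIn Gᶜ (S i) s) ≤ lam)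
    (hl : q * (L + lam) ≤ l) (hl10 : 10 * lam < l) : HasAnticompleteFamily G S q L := by
  by_contra hanti
  obtain ⟨j, hj, J, hJ, hjJ, hJq, hlinkj⟩ :=
    h.exists_forall_linked hanti hN hqL subset_rfl hI (by positivity)
  obtain ⟨c, hc, K, hK, hcK, hKq, hlink⟩ := h.exists_forall_linked hanti hN hqL hJ hJq.ge hq
  refine hanti <| h.hasAnticompleteFamily_of_propagation (hJ hc) (hK.trans hJ) hcK hKq hlink hl
    fun k hk l hl hkl s hs t ht hst => ?_
  exact h.nbrsIn_subset_of_dense hG (hJ hc) (hJ (hK hk)) (hJ (hK hl)) hj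
    (ne_of_mem_of_not_mem hk hcK).symm (ne_of_mem_of_not_mem hl hcK).symm hkl
    (ne_of_mem_of_not_mem hc hjJ).symm (ne_of_mem_of_not_mem (hK hk) hjJ).symm
    (ne_of_mem_of_not_mem (hK hl) hjJ).symm hdense (hlinkj c hc) (hlinkj l (hK hl)) hl10
    hs ht hst

end BlockSystem

/-- The pairs `(w, φ w)` for `w ∈ M` are the edges of a matching from `M` into `B`. -/
structure IsMatchingMap (G : SimpleGraph V) (M B : Finset V) (φ : V → V) : Prop where
  mapsTo : ∀ w ∈ M, φ w ∈ B
  injOn : Set.InjOn φ M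
  adj : ∀ w ∈ M, G.Adj w (φ w)

/-- For a vertex `x` representing the tuple `fun i => f i x`: the tuples of `x` and `y` coincide or
have an edge between entries with different indices. -/
def Conflict {ι : Type*} (G : SimpleGraph V) (f : ι → V → V) (x y : V) : Prop :=
  x = y ∨ ∃ i j, i ≠ j ∧ G.Adj (f i x) (f j y)

theorem IsMatchingMap.mono {M M' B : Finset V} {φ : V → V} (h : IsMatchingMap G M B φ)
    (hM : M' ⊆ M) : IsMatchingMap G M' B φ where
  mapsTo w hw := h.mapsTo w (hM hw)
  injOn := h.injOn.mono (coe_subset.2 hM)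
  adj w hw := h.adj w (hM hw)

theorem Linked.exists_isMatchingMap {A B : Finset V} {l : ℕ} (h : Linked G A B l) :
    ∃ Y ⊆ A, ∃ φ, l ≤ #Y ∧ IsMatchingMap G Y B φ := by
  classical
  obtain ⟨M, hM, hl⟩ := h
  have hpartner : ∀ y ∈ M.image Prod.fst, ∃ z, (y, z) ∈ M := by simp
  choose! φ hφ using hpartner
  refine ⟨M.image Prod.fst, ?_, φ, by rwa [card_image_of_injOn hM.injOn_fst], ?_⟩
  · exact image_subset_iff.2 fun e he => (hM.mem he).1
  · exact {
      mapsTo := fun w hw => (hM.mem (hφ w hw)).2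
      injOn := fun w hw w' hw' hww' =>
        congrArg Prod.fst (hM.injOn_snd (hφ w hw) (hφ w' hw') hww')
      adj := fun w hw => hM.adj _ (hφ w hw) }

theorem exists_le_card_inter {ι : Type*} [DecidableEq V] {K : Finset ι} {Y : ι → Finset V}
    {A : Finset V} {l w : ℕ} (hY : ∀ i ∈ K, Y i ⊆ A) (hl : ∀ i ∈ K, l ≤ #(Y i))
    (hK : #A + #K * (#K * w) < #K * l) : ∃ i ∈ K, ∃ j ∈ K, i ≠ j ∧ w ≤ #(Y i ∩ Y j) := by
  classical
  by_contra! hsmall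
  set Z : ι → Finset V := fun i => Y i \ (K.erase i).biUnion fun j => Y i ∩ Y j with hZ
  have hdisj : (K : Set ι).PairwiseDisjoint Z := by
    intro i _ j hj hij
    refine disjoint_left.2 fun x hx hx' => ?_
    simp only [hZ, mem_sdiff, mem_biUnion, mem_erase, mem_inter, not_exists, not_and] at hx hx'
    exact hx.2 j ⟨hij.symm, hj⟩ hx.1 hx'.1
  have hcardZ : ∀ i ∈ K, l ≤ #(Z i) + #K * w := by
    intro i hi
    have hoverlap : #((K.erase i).biUnion fun j => Y i ∩ Y j) ≤ #K * w :=
      (card_biUnion_le_card_mul _ _ _ fun j hj =>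
        (hsmall i hi j (mem_of_mem_erase hj) (ne_of_mem_erase hj).symm).le).trans
        (Nat.mul_le_mul_right w (card_le_card (erase_subset i K)))
    have hsdiff := le_card_sdiff ((K.erase i).biUnion fun j => Y i ∩ Y j) (Y i)
    have := hl i hi
    simp only [hZ]
    omega
  have hunion : ∑ i ∈ K, #(Z i) ≤ #A := by
    rw [← card_biUnion hdisj]
    exact card_le_card (biUnion_subset.2 fun i hi => sdiff_subset.trans (hY i hi))
  have hsum := sum_le_sum hcardZ
  simp only [sum_add_distrib, sum_const, smul_eq_mul] at hsum
  omega

theorem exists_subset_forall_or_forall_not (M : Finset V) (P : V → Prop) :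
    ∃ M' ⊆ M, #M ≤ 2 * #M' ∧ ((∀ y ∈ M', P y) ∨ ∀ y ∈ M', ¬ P y) := by
  classical
  have hsplit : #{y ∈ M | P y} + #{y ∈ M | ¬ P y} = #M := card_filter_add_card_filter_not P
  obtain h | h := le_total #{y ∈ M | P y} #{y ∈ M | ¬ P y}
  · exact ⟨{y ∈ M | ¬ P y}, filter_subset _ _, by omega, .inr fun y hy => (mem_filter.1 hy).2⟩
  · exact ⟨{y ∈ M | P y}, filter_subset _ _, by omega, .inl fun y hy => (mem_filter.1 hy).2⟩

theorem HereditarilyDense.of_le {H : SimpleGraph V} {U : Finset V} {n p : ℕ}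
    (h : HereditarilyDense G U n p) (hGH : G ≤ H) : HereditarilyDense H U n p := by
  intro W hW hn
  obtain ⟨x, hx, hxW⟩ := h W hW hn
  refine ⟨x, hx, hxW.trans (Nat.mul_le_mul_left p (card_le_card fun y hy => ?_))⟩
  exact mem_nbrsIn.2 ⟨(mem_nbrsIn.1 hy).1, hGH (mem_nbrsIn.1 hy).2⟩

theorem HereditarilyDense.comap {B M : Finset V} {n p : ℕ} (h : HereditarilyDense G B n p)
    {φ : V → V} (hmaps : ∀ w ∈ M, φ w ∈ B) (hinj : Set.InjOn φ M) :
    HereditarilyDense (G.comap φ) M n p := by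
  classical
  intro W hW hn
  have hcard : #(W.image φ) = #W := card_image_of_injOn (hinj.mono (coe_subset.2 hW))
  obtain ⟨y, hy, hdeg⟩ :=
    h (W.image φ) (image_subset_iff.2 fun w hw => hmaps w (hW hw)) (hcard.symm ▸ hn)
  obtain ⟨x, hx, rfl⟩ := mem_image.1 hy
  have hnbrs : nbrsIn G (W.image φ) (φ x) ⊆ (nbrsIn (G.comap φ) W x).image φ := by
    intro y hy
    obtain ⟨hy, hadj⟩ := mem_nbrsIn.1 hy
    obtain ⟨w, hw, rfl⟩ := mem_image.1 hy
    exact mem_image_of_mem φ (mem_nbrsIn.2 ⟨hw, hadj⟩)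
  exact ⟨x, hx, (hcard.symm.le.trans hdeg).trans
    (Nat.mul_le_mul_left p ((card_le_card hnbrs).trans card_image_le))⟩

namespace BlockSystem

variable {I : Finset V} {S : V → Finset V} {lam : ℕ}

open scoped Classical in
theorem card_conflict_le {ι : Type*} [Fintype ι] (h : BlockSystem G I S lam) {b : ι → V}
    (hb : ∀ i, b i ∈ I) (hbinj : Function.Injective b) {M : Finset V} {f : ι → V → V}
    (hf : ∀ i, ∀ w ∈ M, f i w ∈ S (b i)) (hfinj : ∀ i, Set.InjOn (f i) M) {x : V} (hx : x ∈ M) :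
    #{y ∈ M | Conflict G f x y} ≤ #(univ.offDiag : Finset (ι × ι)) * lam + 1 := by
  have hedges : ∀ ij ∈ (univ.offDiag : Finset (ι × ι)),
      #{y ∈ M | G.Adj (f ij.1 x) (f ij.2 y)} ≤ lam := by
    intro ij hij
    refine (card_le_card_of_injOn (f ij.2) (fun y hy => ?_) ?_).trans
      (h.card_nbrsIn_le _ (hb ij.2) _ (hb ij.1) (hbinj.ne (mem_offDiag.1 hij).2.2.symm) _
        (hf ij.1 x hx))
    · obtain ⟨hyM, hadj⟩ := mem_filter.1 hy
      exact mem_nbrsIn.2 ⟨hf ij.2 y hyM, hadj⟩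
    · exact (hfinj ij.2).mono (coe_subset.2 (filter_subset _ _))
  have hcover : {y ∈ M | Conflict G f x y} ⊆
      insert x (univ.offDiag.biUnion fun ij => {y ∈ M | G.Adj (f ij.1 x) (f ij.2 y)}) := by
    intro y hy
    obtain ⟨hyM, rfl | ⟨i, j, hij, hadj⟩⟩ := mem_filter.1 hy
    · exact mem_insert_self _ _
    · exact mem_insert_of_mem <| mem_biUnion.2
        ⟨(i, j), by simpa using hij, mem_filter.2 ⟨hyM, hadj⟩⟩
  exact ((card_le_card hcover).trans (card_insert_le _ _)).trans
    (Nat.add_le_add_right (card_biUnion_le_card_mul _ _ _ hedges) 1)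

theorem tripleSystem (h : BlockSystem G I S lam) {a b c : V} (ha : a ∈ I) (hb : b ∈ I)
    (hc : c ∈ I) (hca : c ≠ a) (hcb : c ≠ b) (hab : a ≠ b) {W : Finset V} (hW : W ⊆ S c)
    {φ ψ : V → V} (hφ : IsMatchingMap G W (S a) φ) (hψ : IsMatchingMap G W (S b) ψ)
    (hconf : (W : Set V).Pairwise fun x y => ¬ Conflict G ![id, φ, ψ] x y) :
    TripleSystem G W φ ψ a b where
  adj_left := hφ.adj
  adj_right := hψ.adj
  not_adj_left _ hw _ hw' hne hadj := hconf hw hw' hne (.inr ⟨0, 1, by decide, hadj⟩)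
  not_adj_right _ hw _ hw' hne hadj := hconf hw hw' hne (.inr ⟨0, 2, by decide, hadj⟩)
  not_adj_left_right _ hw _ hw' hne hadj := hconf hw hw' hne (.inr ⟨1, 2, by decide, hadj⟩)
  apex_left_adj w hw := h.apex_adj a ha _ (hφ.mapsTo w hw)
  apex_right_adj w hw := h.apex_adj b hb _ (hψ.mapsTo w hw)
  apex_left_not_adj_base w hw := h.not_adj_apex a ha c hc hca.symm w (hW hw)
  apex_right_not_adj_base w hw := h.not_adj_apex b hb c hc hcb.symm w (hW hw)
  apex_left_not_adj_right w hw := h.not_adj_apex a ha b hb hab _ (hψ.mapsTo w hw)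
  apex_right_not_adj_left w hw := h.not_adj_apex b hb a ha hab.symm _ (hφ.mapsTo w hw)

theorem exists_isMatchingMap_isMatchingMap (h : BlockSystem G I S lam) {q L P N l w : ℕ}
    (hanti : ¬ HasAnticompleteFamily G S q L) (hP : 0 < P) (hI : q * P ≤ #I)
    (hN : ∀ i ∈ I, #(S i) = N) (hqL : 2 * q * l + L ≤ N) (hw : N + P * (P * w) < P * l) :
    ∃ a ∈ I, ∃ b ∈ I, ∃ c ∈ I, c ≠ a ∧ c ≠ b ∧ a ≠ b ∧ ∃ M ⊆ S c, ∃ φ ψ, w ≤ #M ∧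
      IsMatchingMap G M (S a) φ ∧ IsMatchingMap G M (S b) ψ := by
  classical
  obtain ⟨c, hc, K, hKI, hcK, rfl, hlink⟩ :=
    h.exists_forall_linked hanti (fun i hi => (hN i hi).ge) hqL subset_rfl hI hP
  choose! Y hY φ hl hφ using fun i (hi : i ∈ K) => (hlink i hi).exists_isMatchingMap
  obtain ⟨a, ha, b, hb, hab, hwab⟩ := exists_le_card_inter hY hl (by rwa [hN c hc])
  exact ⟨a, hKI ha, b, hKI hb, c, hc, (ne_of_mem_of_not_mem ha hcK).symm,
    (ne_of_mem_of_not_mem hb hcK).symm, hab, Y a ∩ Y b, inter_subset_left.trans (hY a ha),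
    φ a, φ b, hwab, (hφ a ha).mono inter_subset_left, (hφ b hb).mono inter_subset_right⟩

theorem exists_tripleSystem_sample (h : BlockSystem G I S lam) {a b c : V} (ha : a ∈ I)
    (hb : b ∈ I) (hc : c ∈ I) (hca : c ≠ a) (hcb : c ≠ b) (hab : a ≠ b) {M : Finset V}
    (hM : M ⊆ S c) {φ ψ : V → V} (hφ : IsMatchingMap G M (S a) φ) (hψ : IsMatchingMap G M (S b) ψ)
    {n p s r : ℕ} (hdense : ∀ i ∈ I, HereditarilyDense G (S i) n p)
    (hdense' : ∀ i ∈ I, HereditarilyDense Gᶜ (S i) n p) (hp : 0 < p) (hs₀ : 0 < s) (hsr : s ≤ r)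
    (hs : #M * (p - 1) ^ s < n * p ^ s) (hMn : 16 * (r + 1) ^ 2 * n ≤ #M)
    (hMlam : 2 * r ^ 2 * (6 * lam + 1) ≤ #M) :
    ∃ W ⊆ M, #W = r ∧ TripleSystem G W φ ψ a b ∧ G.IndepSetFreeOn W (2 * s) ∧
      G.CliqueFreeOn W (2 * s) ∧ (G.comap φ).IndepSetFreeOn W (2 * s) ∧
      (G.comap φ)ᶜ.IndepSetFreeOn W (2 * s) := by
  have hcompl : Gᶜ.comap φ ≤ (G.comap φ)ᶜ :=
    fun x y hxy => ⟨fun e => hxy.1 (congrArg φ e), hxy.2⟩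
  obtain ⟨W, hWM, hWr, hconf, hW⟩ := exists_conflictFree_sample M
    ![G, Gᶜ, G.comap φ, (G.comap φ)ᶜ] (Conflict G ![id, φ, ψ]) (fun _ => .inl rfl) hp hs₀ hsr
    (fun k => by
      fin_cases k
      exacts [(hdense c hc).subset hM, (hdense' c hc).subset hM,
        (hdense a ha).comap hφ.mapsTo hφ.injOn,
        ((hdense' a ha).comap hφ.mapsTo hφ.injOn).of_le hcompl])
    hs hMn (fun x hx => h.card_conflict_le (b := ![c, a, b])
      (by simp [Fin.forall_fin_succ, ha, hb, hc])
      (by intro i j; fin_cases i <;> fin_cases j <;> simp_all [eq_comm])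
      (by simpa [Fin.forall_fin_succ] using ⟨fun w hw => hM hw, hφ.mapsTo, hψ.mapsTo⟩)
      (by simp [Fin.forall_fin_succ, Set.injOn_id, hφ.injOn, hψ.injOn]) hx) hMlam
  refine ⟨W, hWM, hWr, ?_, hW 0, ?_, hW 2, hW 3⟩
  · exact h.tripleSystem ha hb hc hca hcb hab (hWM.trans hM) (hφ.mono hWM) (hψ.mono hWM) hconf
  · exact compl_compl G ▸ cliqueFreeOn_compl.2 (hW 1)

theorem hasAnticompleteFamily_of_hereditarilyDense (h : BlockSystem G I S lam) (hG : C7Free G)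
    {q L N l n p P w s r : ℕ} (hP : 0 < P) (hI : q * P ≤ #I) (hN : ∀ i ∈ I, #(S i) = N)
    (hqL : 2 * q * l + L ≤ N) (hdense : ∀ i ∈ I, HereditarilyDense G (S i) n p)
    (hdense' : ∀ i ∈ I, HereditarilyDense Gᶜ (S i) n p) (hw : N + P * (P * w) < P * l)
    (hp : 0 < p) (hs₀ : 0 < s) (hsr : (2 * s) ^ 3 ≤ r) (hs : N * (p - 1) ^ s < n * p ^ s)
    (hwn : 32 * (r + 1) ^ 2 * n ≤ w) (hwlam : 4 * r ^ 2 * (6 * lam + 1) ≤ w) :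
    HasAnticompleteFamily G S q L := by
  by_contra hanti
  obtain ⟨a, ha, b, hb, c, hc, hca, hcb, hab, M₀, hM₀, φ, ψ, hwM₀, hφ, hψ⟩ :=
    h.exists_isMatchingMap_isMatchingMap hanti hP hI hN hqL hw
  obtain ⟨M, hM, hM₀M, hdiag⟩ := exists_subset_forall_or_forall_not M₀ fun y => G.Adj (φ y) (ψ y)
  have hMN : #M ≤ N := hN c hc ▸ card_le_card (hM.trans hM₀)
  have hsr' : s ≤ r := by nlinarith [Nat.le_self_pow three_ne_zero (2 * s)]
  obtain ⟨W, hWM, rfl, hT, hind, hcl, hindφ, hclφ⟩ := h.exists_tripleSystem_sample ha hb hc hca hcb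
    hab (hM.trans hM₀) (hφ.mono hM) (hψ.mono hM) hdense hdense' hp hs₀ hsr'
    ((Nat.mul_le_mul_right _ hMN).trans_lt hs) (by linarith) (by linarith)
  obtain hdiag | hdiag := hdiag
  · exact hT.false_of_diag hG (fun x hx => hdiag x (hWM hx)) (by positivity) hsr hind hindφ hclφ
  · exact hT.false_of_not_diag hG (fun x hx => hdiag x (hWM hx)) (by positivity) hsr hind hcl

end BlockSystem

theorem two_pow_mul_sub_one_pow_le {p : ℕ} (hp : 0 < p) (q : ℕ) :
    2 ^ q * (p - 1) ^ (p * q) ≤ p ^ (p * q) := by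
  obtain ⟨k, rfl⟩ : ∃ k, p = k + 1 := ⟨p - 1, by omega⟩
  have hbernoulli : 2 * k ^ (k + 1) ≤ (k + 1) ^ (k + 1) :=
    calc 2 * k ^ (k + 1) ≤ k ^ (k + 1) + (k + 1 : ℕ) * k ^ (k + 1 - 1) * 1 := by
          rw [Nat.add_sub_cancel, pow_succ]
          nlinarith [Nat.zero_le (k ^ k)]
      _ ≤ (k + 1) ^ (k + 1) := pow_add_mul_le_add_pow (by simp) (by omega) _
  calc 2 ^ q * k ^ ((k + 1) * q) = (2 * k ^ (k + 1)) ^ q := by rw [mul_pow, ← pow_mul]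
    _ ≤ ((k + 1) ^ (k + 1)) ^ q := Nat.pow_le_pow_left hbernoulli q
    _ = (k + 1) ^ ((k + 1) * q) := (pow_mul _ _ _).symm

theorem mul_sub_one_pow_lt_mul_pow {p q n N : ℕ} (hp : 2 ≤ p) (hN : N < n * 2 ^ q) :
    N * (p - 1) ^ (p * q) < n * p ^ (p * q) := by
  have hpos : 0 < (p - 1) ^ (p * q) := pow_pos (by omega) _
  calc N * (p - 1) ^ (p * q) < n * 2 ^ q * (p - 1) ^ (p * q) := by gcongr
    _ = n * (2 ^ q * (p - 1) ^ (p * q)) := mul_assoc _ _ _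
    _ ≤ n * p ^ (p * q) := Nat.mul_le_mul_left n (two_pow_mul_sub_one_pow_le (by omega) q)

theorem exists_dyadic_subset {ι : Type*} {J : Finset ι} {f : ι → ℕ} {n q k : ℕ} (hn : 0 < n)
    (hnf : ∀ i ∈ J, n ≤ f i) (hfn : ∀ i ∈ J, f i ≤ n * 2 ^ q) (hJ : (q + 1) * k ≤ #J) :
    ∃ J' ⊆ J, k ≤ #J' ∧ ∃ M, n < 2 * M ∧ ∀ i ∈ J', M ≤ f i ∧ f i < 2 * M := by
  have hmaps : ∀ i ∈ J, Nat.log 2 (f i) ∈ Icc (Nat.log 2 n) (Nat.log 2 n + q) := by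
    intro i hi
    refine mem_Icc.2 ⟨Nat.log_mono_right (hnf i hi), Nat.le_of_lt_succ ?_⟩
    refine Nat.log_lt_of_lt_pow (hn.trans_le (hnf i hi)).ne' ?_
    calc f i ≤ n * 2 ^ q := hfn i hi
      _ < 2 ^ (Nat.log 2 n + 1) * 2 ^ q := by
        gcongr
        exact Nat.lt_pow_succ_log_self one_lt_two n
      _ = 2 ^ (Nat.log 2 n + q).succ := by rw [← pow_add, Nat.succ_eq_add_one]; ring_nf
  obtain ⟨e, he, hk⟩ := exists_le_card_fiber_of_mul_le_card_of_maps_to hmaps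
    ⟨Nat.log 2 n, by simp⟩ (n := k) (by rwa [Nat.card_Icc, add_assoc, Nat.add_sub_cancel_left])
  refine ⟨_, filter_subset _ _, hk, 2 ^ e, ?_, fun i hi => ?_⟩
  · rw [← pow_succ']
    exact (Nat.lt_pow_succ_log_self one_lt_two n).trans_le
      (Nat.pow_le_pow_right two_pos (Nat.succ_le_succ (mem_Icc.1 he).1))
  · obtain ⟨hiJ, rfl⟩ := mem_filter.1 hi
    rw [← pow_succ']
    exact ⟨Nat.pow_log_le_self 2 (hn.trans_le (hnf i hiJ)).ne',
      Nat.lt_pow_succ_log_self one_lt_two _⟩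

namespace BlockSystem

variable {I : Finset V} {S : V → Finset V} {lam : ℕ}

theorem hasAnticompleteFamily_of_sparse_or_dense (h : BlockSystem G I S lam) (hG : C7Free G)
    {q L M : ℕ} (hq : 100 ≤ q) (hI : q ^ 3 ≤ #I) (hM : ∀ i ∈ I, M ≤ #(S i))
    (hlam : lam * q ^ 4 ≤ 2 * M) (hL : L * q ^ 4 ≤ M) (hqM : 4 * q ≤ M)
    (hS : (∀ i ∈ I, ∀ s ∈ S i, #(nbrsIn G (S i) s) ≤ lam) ∨
      ∀ i ∈ I, ∀ s ∈ S i, #(nbrsIn Gᶜ (S i) s) ≤ lam) : HasAnticompleteFamily G S q L := by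
  set l := M / (4 * q) with hl
  have hlM : l * (4 * q) ≤ M := Nat.div_mul_le_self _ _
  have hl₀ : 0 < l := Nat.div_pos hqM (by omega)
  have hqL : 2 * q * l + L ≤ M := by
    have : 2 ≤ q ^ 4 := le_trans (by omega) (Nat.le_self_pow four_ne_zero q)
    nlinarith
  have hlamL : q * (L + lam) ≤ l := by
    rw [hl, Nat.le_div_iff_mul_le (by omega)]
    refine le_of_mul_le_mul_left (a := q ^ 2) ?_ (by positivity)
    calc q ^ 2 * (q * (L + lam) * (4 * q)) = 4 * (L * q ^ 4 + lam * q ^ 4) := by ring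
      _ ≤ 4 * (M + 2 * M) := by gcongr
      _ = 12 * M := by ring
      _ ≤ q ^ 2 * M := by gcongr; nlinarith
  have hlaml : 10 * lam < l := by
    obtain rfl | hlam₀ := Nat.eq_zero_or_pos lam
    · simpa using hl₀
    · nlinarith
  obtain hsparse | hdense := hS
  · exact h.hasAnticompleteFamily_of_sparse hG (by omega) (le_trans (by nlinarith) hI) hM hqL
      hsparse hlamL (by omega)
  · exact h.hasAnticompleteFamily_of_dense hG (by omega) (le_trans (by nlinarith) hI) hM hqL
      hdense hlamL hlaml

theorem hasAnticompleteFamily_of_not_hereditarilyDense (h : BlockSystem G I S lam)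
    (hG : C7Free G) {H : SimpleGraph V} (hH : H = G ∨ H = Gᶜ) {q L N n : ℕ} (hq : 100 ≤ q)
    (hq2 : q ^ 41 ≤ 2 ^ q) (hn : 0 < n) (hN : ∀ i ∈ I, #(S i) ≤ N) (hNn : N ≤ n * q ^ 41)
    (hlam : lam * q ^ 45 ≤ N) (hL : L * q ^ 46 ≤ N) (hqN : q ^ 47 ≤ N)
    (hI : (q + 1) * q ^ 3 ≤ #I) (hS : ∀ i ∈ I, ¬ HereditarilyDense H (S i) n (q ^ 4)) :
    HasAnticompleteFamily G S q L := by
  have hsparse : ∀ i, ∃ T ⊆ S i, i ∈ I →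
      n ≤ #T ∧ ∀ x ∈ T, q ^ 4 * #(nbrsIn H T x) < #T := by
    intro i
    by_cases hi : i ∈ I
    · simpa only [HereditarilyDense, hi, not_forall, not_exists, not_and, not_le, exists_prop,
        forall_const] using hS i hi
    · exact ⟨∅, empty_subset _, fun h => absurd h hi⟩
  choose T hTS hT using hsparse
  have hnT : ∀ i ∈ I, n ≤ #(T i) := fun i hi => (hT i hi).1
  have hdeg : ∀ i ∈ I, ∀ x ∈ T i, q ^ 4 * #(nbrsIn H (T i) x) < #(T i) := fun i hi => (hT i hi).2
  obtain ⟨J, hJI, hJ, M, hnM, hM⟩ := exists_dyadic_subset hn hnT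
    (fun i hi => (card_le_card (hTS i)).trans
      ((hN i hi).trans (hNn.trans (Nat.mul_le_mul_left n hq2)))) hI
  have le_two_mul : ∀ a, a * q ^ 41 ≤ N → a ≤ 2 * M := fun a ha =>
    Nat.le_of_mul_le_mul_right (ha.trans (hNn.trans (by gcongr))) (by positivity : 0 < q ^ 41)
  have hlamM : lam ≤ 2 * M / q ^ 4 :=
    (Nat.le_div_iff_mul_le (by positivity)).2 (le_two_mul _ (by rwa [mul_assoc, ← pow_add]))
  have hLM : L * q ^ 5 ≤ 2 * M := le_two_mul _ (by rwa [mul_assoc, ← pow_add])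
  have hqM : q ^ 6 ≤ 2 * M := le_two_mul _ (by rwa [← pow_add])
  have hblocks : BlockSystem G J T (2 * M / q ^ 4) :=
    h.mono hJI (fun i _ => hTS i) hlamM
  have hdegH : ∀ i ∈ J, ∀ x ∈ T i, #(nbrsIn H (T i) x) ≤ 2 * M / q ^ 4 := fun i hi x hx => by
    rw [Nat.le_div_iff_mul_le (by positivity), mul_comm]
    exact (hdeg i (hJI hi) x hx).le.trans (hM i hi).2.le
  have hanti : HasAnticompleteFamily G T q L :=
    hblocks.hasAnticompleteFamily_of_sparse_or_dense hG hq hJ (fun i hi => (hM i hi).1)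
      (Nat.div_mul_le_self _ _) (by nlinarith [pow_succ q 4])
      (by nlinarith [pow_succ q 5, Nat.le_self_pow (show 5 ≠ 0 by decide) q])
      (by obtain rfl | rfl := hH; exacts [.inl hdegH, .inr hdegH])
  exact hanti.mono hTS

theorem hasAnticompleteFamily_of_hereditarilyDense_pow (h : BlockSystem G I S lam)
    (hG : C7Free G) {q L N n : ℕ} (hq : 1000 ≤ q) (hq2 : q ^ 41 ≤ 2 ^ q)
    (hN : ∀ i ∈ I, #(S i) = N) (hNn : N < n * q ^ 41) (hnN : n * q ^ 41 ≤ 2 * N)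
    (hlam : lam * q ^ 45 ≤ N) (hL : L * q ^ 46 ≤ N) (hqN : q ^ 47 ≤ N) (hI : 8 * q ^ 2 ≤ #I)
    (hdense : ∀ i ∈ I, HereditarilyDense G (S i) n (q ^ 4))
    (hdense' : ∀ i ∈ I, HereditarilyDense Gᶜ (S i) n (q ^ 4)) :
    HasAnticompleteFamily G S q L := by
  have hr : 8 * q ^ 15 + 1 ≤ q ^ 16 := by
    rw [pow_succ q 15]
    nlinarith [Nat.one_le_pow 15 q (by omega)]
  have hl : N / (4 * q) * (4 * q) ≤ N := Nat.div_mul_le_self _ _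
  have hl' : N < N / (4 * q) * (4 * q) + 4 * q := Nat.lt_div_mul_add (by omega)
  have hw : N / (128 * q ^ 2) * (128 * q ^ 2) ≤ N := Nat.div_mul_le_self _ _
  have hq2N : q ^ 2 ≤ N := (Nat.pow_le_pow_right (by omega) (by norm_num)).trans hqN
  have hq45N : q ^ 45 ≤ N := (Nat.pow_le_pow_right (by omega) (by norm_num)).trans hqN
  have hqbig : 8192 ≤ q ^ 7 := le_trans (by norm_num) (Nat.pow_le_pow_left hq 7)
  have hqbig' : 3584 ≤ q ^ 11 := le_trans (by norm_num) (Nat.pow_le_pow_left hq 11)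
  refine h.hasAnticompleteFamily_of_hereditarilyDense hG (P := 8 * q) (l := N / (4 * q))
    (w := N / (128 * q ^ 2)) (s := q ^ 4 * q) (r := 8 * q ^ 15) (by omega)
    (le_trans (le_of_eq (by ring)) hI) hN ?_ hdense hdense' ?_ (by positivity) (by positivity)
    (le_of_eq (by ring))
    (mul_sub_one_pow_lt_mul_pow (le_trans (by omega) (Nat.le_self_pow four_ne_zero q))
      (hNn.trans_le (Nat.mul_le_mul_left n hq2))) ?_ ?_
  · have : 2 ≤ q ^ 46 := le_trans (by omega) (Nat.le_self_pow (by decide) q)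
    nlinarith
  · nlinarith
  · rw [Nat.le_div_iff_mul_le (by positivity)]
    refine le_of_mul_le_mul_left (a := q ^ 7) ?_ (by positivity)
    calc q ^ 7 * (32 * (8 * q ^ 15 + 1) ^ 2 * n * (128 * q ^ 2))
        ≤ q ^ 7 * (32 * (q ^ 16) ^ 2 * n * (128 * q ^ 2)) := by gcongr
      _ = 4096 * (n * q ^ 41) := by ring
      _ ≤ 4096 * (2 * N) := by gcongr
      _ = 8192 * N := by ring
      _ ≤ q ^ 7 * N := by gcongr
  · rw [Nat.le_div_iff_mul_le (by positivity)]
    refine le_of_mul_le_mul_left (a := q ^ 11) ?_ (by positivity)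
    calc q ^ 11 * (4 * (8 * q ^ 15) ^ 2 * (6 * lam + 1) * (128 * q ^ 2))
        ≤ q ^ 11 * (4 * (q ^ 16) ^ 2 * (6 * lam + 1) * (128 * q ^ 2)) := by gcongr; omega
      _ = 3072 * (lam * q ^ 45) + 512 * q ^ 45 := by ring
      _ ≤ 3072 * N + 512 * N := by gcongr
      _ = 3584 * N := by ring
      _ ≤ q ^ 11 * N := by gcongr

open scoped Classical in
theorem card_filter_not_hereditarilyDense_lt (h : BlockSystem G I S lam) (hG : C7Free G)
    {H : SimpleGraph V} (hH : H = G ∨ H = Gᶜ) {q L N n : ℕ}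
    (hanti : ¬ HasAnticompleteFamily G S q L) (hq : 100 ≤ q) (hq2 : q ^ 41 ≤ 2 ^ q) (hn : 0 < n)
    (hN : ∀ i ∈ I, #(S i) ≤ N) (hNn : N ≤ n * q ^ 41) (hlam : lam * q ^ 45 ≤ N)
    (hL : L * q ^ 46 ≤ N) (hqN : q ^ 47 ≤ N) :
    #{i ∈ I | ¬ HereditarilyDense H (S i) n (q ^ 4)} < (q + 1) * q ^ 3 := by
  by_contra! hmany
  have hsub : {i ∈ I | ¬ HereditarilyDense H (S i) n (q ^ 4)} ⊆ I := filter_subset _ _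
  exact hanti <| (h.mono hsub (fun _ _ => subset_rfl) le_rfl)
    |>.hasAnticompleteFamily_of_not_hereditarilyDense hG hH hq hq2 hn (fun i hi => hN i (hsub hi))
      hNn hlam hL hqN hmany fun i hi => (mem_filter.1 hi).2

theorem hasAnticompleteFamily (h : BlockSystem G I S lam) (hG : C7Free G) {q L N : ℕ}
    (hq : 1000 ≤ q) (hq2 : q ^ 41 ≤ 2 ^ q) (hN : ∀ i ∈ I, #(S i) = N) (hlam : lam * q ^ 45 ≤ N)
    (hL : L * q ^ 46 ≤ N) (hqN : q ^ 47 ≤ N) (hI : q ^ 5 ≤ #I) :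
    HasAnticompleteFamily G S q L := by
  classical
  by_contra hanti
  set n := N / q ^ 41 + 1 with hn
  have hNn : N < n * q ^ 41 := by
    rw [hn, add_one_mul]
    exact Nat.lt_div_mul_add (by positivity)
  have hnN : n * q ^ 41 ≤ 2 * N := by
    have := Nat.div_mul_le_self N (q ^ 41)
    have : q ^ 41 ≤ N := (Nat.pow_le_pow_right (by omega) (by norm_num)).trans hqN
    rw [hn, add_one_mul]
    omega
  have hfew : ∀ H : SimpleGraph V, H = G ∨ H = Gᶜ →
      #{i ∈ I | ¬ HereditarilyDense H (S i) n (q ^ 4)} < (q + 1) * q ^ 3 := fun H hH =>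
    h.card_filter_not_hereditarilyDense_lt hG hH hanti (by omega) hq2 (Nat.succ_pos _)
      (fun i hi => (hN i hi).le) hNn.le hlam hL hqN
  set J := {i ∈ I | HereditarilyDense G (S i) n (q ^ 4) ∧ HereditarilyDense Gᶜ (S i) n (q ^ 4)}
    with hJ
  have hJI : J ⊆ I := filter_subset _ _
  have hcover : I ⊆ J ∪ ({i ∈ I | ¬ HereditarilyDense G (S i) n (q ^ 4)} ∪
      {i ∈ I | ¬ HereditarilyDense Gᶜ (S i) n (q ^ 4)}) := by
    intro i hi
    simp only [hJ, mem_union, mem_filter, hi, true_and]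
    tauto
  have hcard := (card_le_card hcover).trans ((card_union_le _ _).trans
    (Nat.add_le_add_left (card_union_le _ _) _))
  have hJcard : 8 * q ^ 2 ≤ #J := by
    have hfewG := hfew G (.inl rfl)
    have hfewGc := hfew Gᶜ (.inr rfl)
    have : 8 * q ^ 2 + 2 * ((q + 1) * q ^ 3) ≤ q ^ 5 := by
      rw [show q ^ 5 = q * q * q * q ^ 2 by ring,
        show (q + 1) * q ^ 3 = (q + 1) * q * q ^ 2 by ring, ← mul_assoc, ← add_mul]
      exact Nat.mul_le_mul_right _ (by nlinarith)
    omega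
  exact hanti <| (h.mono hJI (fun _ _ => subset_rfl) le_rfl)
    |>.hasAnticompleteFamily_of_hereditarilyDense_pow hG hq hq2 (fun i hi => hN i (hJI hi)) hNn
      hnN hlam hL hqN hJcard (fun i hi => (mem_filter.1 hi).2.1) (fun i hi => (mem_filter.1 hi).2.2)

end BlockSystem

theorem nbrsIn_nbrsIn_comm {H₁ H₂ : SimpleGraph V} {X : Finset V} {u w : V} :
    nbrsIn H₂ (nbrsIn H₁ X u) w = nbrsIn H₁ (nbrsIn H₂ X w) u := by
  ext x
  simp only [mem_nbrsIn]
  tauto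

theorem sum_card_nbrsIn_comm (A B : Finset V) :
    ∑ a ∈ A, #(nbrsIn G B a) = ∑ b ∈ B, #(nbrsIn G A b) := by
  classical
  calc ∑ a ∈ A, #(nbrsIn G B a) = ∑ b ∈ B, #{a ∈ A | G.Adj a b} :=
        sum_card_bipartiteAbove_eq_sum_card_bipartiteBelow G.Adj
    _ = ∑ b ∈ B, #(nbrsIn G A b) := by simp only [nbrsIn, G.adj_comm]

theorem sum_card_nbrsIn_nbrsIn_le {H₁ H₂ : SimpleGraph V} {X : Finset V} {a b : ℕ} {v : V}
    (h₁ : #(nbrsIn H₁ X v) ≤ a) (h₂ : ∀ z ∈ X, #(nbrsIn H₂ X z) ≤ b) :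
    ∑ w ∈ X, #(nbrsIn H₂ (nbrsIn H₁ X v) w) ≤ a * b :=
  calc ∑ w ∈ X, #(nbrsIn H₂ (nbrsIn H₁ X v) w) = ∑ z ∈ nbrsIn H₁ X v, #(nbrsIn H₂ X z) :=
        sum_card_nbrsIn_comm _ _
    _ ≤ #(nbrsIn H₁ X v) • b := sum_le_card_nsmul _ _ _ fun z hz => h₂ z (nbrsIn_subset hz)
    _ ≤ a * b := Nat.mul_le_mul_right _ h₁

theorem mul_card_filter_lt_le {X : Finset V} {f : V → ℕ} {t : ℕ} :
    (t + 1) * #{w ∈ X | t < f w} ≤ ∑ w ∈ X, f w :=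
  calc (t + 1) * #{w ∈ X | t < f w} = #{w ∈ X | t < f w} • (t + 1) := mul_comm _ _
    _ ≤ ∑ w ∈ X with t < f w, f w := card_nsmul_le_sum _ _ _ fun _ hw => (mem_filter.1 hw).2
    _ ≤ ∑ w ∈ X, f w := sum_le_sum_of_subset (filter_subset _ _)

/-- `u` and `w` are joined if they are adjacent in `G` or have more than `lam` common neighbours
in `X`. -/
def closeGraph (G : SimpleGraph V) (X : Finset V) (lam : ℕ) : SimpleGraph V :=
  G ⊔ .fromRel fun u w => lam < #(nbrsIn G (nbrsIn G X u) w)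

/-- `v` and `w` are joined if they are adjacent in `G` or if, for some `c`, removing the vertices
close to one of them takes more than a fraction `1 / c` of `D` from the neighbourhood of the other.
Vertices that do not clash can serve as apexes of the same block system. -/
def clashGraph (G : SimpleGraph V) (X : Finset V) (lam D c : ℕ) : SimpleGraph V :=
  G ⊔ .fromRel fun v w => D < c * #(nbrsIn (closeGraph G X lam) (nbrsIn G X v) w)

open scoped Classical in
/-- The neighbours of `i` in `X` that are not close to any other apex in `I`. -/
noncomputable def privateNbrs (G : SimpleGraph V) (X : Finset V) (lam : ℕ) (I : Finset V) (i : V) :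
    Finset V :=
  nbrsIn G X i \ (I.erase i).biUnion (nbrsIn (closeGraph G X lam) (nbrsIn G X i))

section Apexes

variable {X I : Finset V} {lam D Q : ℕ}

theorem closeGraph_adj {u w : V} : (closeGraph G X lam).Adj u w ↔
    G.Adj u w ∨ u ≠ w ∧ lam < #(nbrsIn G (nbrsIn G X u) w) := by
  simp [closeGraph, nbrsIn_nbrsIn_comm (H₁ := G) (H₂ := G) (u := w) (w := u)]

theorem card_nbrsIn_closeGraph_le (hdeg : ∀ v ∈ X, #(nbrsIn G X v) ≤ D)
    (hlam : D ≤ Q * (lam + 1)) {v : V} (hv : v ∈ X) :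
    #(nbrsIn (closeGraph G X lam) X v) ≤ D + D * Q := by
  classical
  set heavy := {w ∈ X | lam < #(nbrsIn G (nbrsIn G X v) w)} with hheavy
  have hsub : nbrsIn (closeGraph G X lam) X v ⊆ nbrsIn G X v ∪ heavy := by
    intro w hw
    rw [mem_nbrsIn, closeGraph_adj] at hw
    simp only [hheavy, mem_union, mem_nbrsIn, mem_filter]
    tauto
  have hheavy_le : (lam + 1) * #heavy ≤ (lam + 1) * (D * Q) :=
    calc (lam + 1) * #heavy ≤ D * D :=
          mul_card_filter_lt_le.trans (sum_card_nbrsIn_nbrsIn_le (hdeg v hv) hdeg)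
      _ ≤ D * (Q * (lam + 1)) := Nat.mul_le_mul_left _ hlam
      _ = (lam + 1) * (D * Q) := by ring
  calc #(nbrsIn (closeGraph G X lam) X v) ≤ #(nbrsIn G X v) + #heavy :=
        (card_le_card hsub).trans (card_union_le _ _)
    _ ≤ D + D * Q :=
        Nat.add_le_add (hdeg v hv) (le_of_mul_le_mul_left hheavy_le (Nat.succ_pos _))

theorem card_nbrsIn_clashGraph_le (hD : 0 < D) (hdeg : ∀ v ∈ X, #(nbrsIn G X v) ≤ D)
    (hlam : D ≤ Q * (lam + 1)) (c : ℕ) {v : V} (hv : v ∈ X) :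
    #(nbrsIn (clashGraph G X lam D c) X v) ≤ D + 2 * (c * (D + D * Q)) := by
  classical
  set C := closeGraph G X lam
  have hclose : ∀ z ∈ X, #(nbrsIn C X z) ≤ D + D * Q :=
    fun z hz => card_nbrsIn_closeGraph_le hdeg hlam hz
  have markov : ∀ f : V → ℕ, ∑ w ∈ X, f w ≤ D * (D + D * Q) →
      #{w ∈ X | D < c * f w} ≤ c * (D + D * Q) := fun f hf =>
    le_of_mul_le_mul_left (a := D)
      (calc D * #{w ∈ X | D < c * f w} ≤ (D + 1) * #{w ∈ X | D < c * f w} := by gcongr; omega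
        _ ≤ ∑ w ∈ X, c * f w := mul_card_filter_lt_le
        _ = c * ∑ w ∈ X, f w := (mul_sum _ _ _).symm
        _ ≤ c * (D * (D + D * Q)) := Nat.mul_le_mul_left _ hf
        _ = D * (c * (D + D * Q)) := by ring) hD
  have h₁ := markov (fun w => #(nbrsIn C (nbrsIn G X v) w))
    (sum_card_nbrsIn_nbrsIn_le (hdeg v hv) hclose)
  have h₂ := markov (fun w => #(nbrsIn C (nbrsIn G X w) v)) <| by
    simp only [nbrsIn_nbrsIn_comm (H₁ := G) (H₂ := C)]
    exact (sum_card_nbrsIn_nbrsIn_le (hclose v hv) hdeg).trans_eq (mul_comm _ _)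
  have hsub : nbrsIn (clashGraph G X lam D c) X v ⊆ nbrsIn G X v ∪
      ({w ∈ X | D < c * #(nbrsIn C (nbrsIn G X v) w)} ∪
        {w ∈ X | D < c * #(nbrsIn C (nbrsIn G X w) v)}) := by
    intro w hw
    simp only [mem_nbrsIn, clashGraph, sup_adj, fromRel_adj] at hw
    simp only [mem_union, mem_nbrsIn, mem_filter]
    tauto
  have := (card_le_card hsub).trans
    ((card_union_le _ _).trans (Nat.add_le_add_left (card_union_le _ _) _))
  have := hdeg v hv
  omega

theorem privateNbrs_subset {i : V} : privateNbrs G X lam I i ⊆ nbrsIn G X i := by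
  classical exact sdiff_subset

theorem not_closeGraph_adj_of_mem_privateNbrs {i j s : V} (hs : s ∈ privateNbrs G X lam I i)
    (hj : j ∈ I) (hji : j ≠ i) : ¬ (closeGraph G X lam).Adj j s := by
  classical
  simp only [privateNbrs, mem_sdiff, mem_biUnion, mem_erase] at hs
  exact fun hjs => hs.2 ⟨j, ⟨hji, hj⟩, mem_nbrsIn.2 ⟨hs.1, hjs⟩⟩

theorem blockSystem_privateNbrs (hI : G.IsIndepSet (I : Set V)) :
    BlockSystem G I (privateNbrs G X lam I) lam where
  apex_adj i _ s hs := (mem_nbrsIn.1 (privateNbrs_subset hs)).2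
  not_adj_apex_apex i hi j hj hij := hI hi hj hij.ne hij
  not_adj_apex i hi j _ hij s hs his :=
    not_closeGraph_adj_of_mem_privateNbrs hs hi hij (closeGraph_adj.2 (.inl his))
  card_nbrsIn_le i hi j hj hij s hs := by
    have hjs : G.Adj j s := (mem_nbrsIn.1 (privateNbrs_subset hs)).2
    have his : i ≠ s := by
      rintro rfl
      exact hI hj hi hij.symm hjs
    refine (card_le_card (nbrsIn_mono privateNbrs_subset)).trans ?_
    by_contra! hlt
    exact not_closeGraph_adj_of_mem_privateNbrs hs hi hij (closeGraph_adj.2 (.inr ⟨his, hlt⟩))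

theorem le_mul_card_privateNbrs (hI : (clashGraph G X lam D (16 * #I)).IsIndepSet (I : Set V))
    {i : V} (hi : i ∈ I) (hdeg : D ≤ 8 * #(nbrsIn G X i)) :
    D ≤ 16 * #(privateNbrs G X lam I i) := by
  classical
  set C := closeGraph G X lam with hC
  have hsmall : ∀ j ∈ I.erase i, 16 * #I * #(nbrsIn C (nbrsIn G X i) j) ≤ D := fun j hj => by
    obtain ⟨hji, hj⟩ := mem_erase.1 hj
    by_contra! hlt
    exact hI hi hj hji.symm (.inr ((fromRel_adj _ _ _).2 ⟨hji.symm, .inl hlt⟩))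
  have hremoved : 16 * #((I.erase i).biUnion (nbrsIn C (nbrsIn G X i))) ≤ D := by
    refine le_of_mul_le_mul_left (a := #I) ?_ (card_pos.2 ⟨i, hi⟩)
    calc #I * (16 * #((I.erase i).biUnion (nbrsIn C (nbrsIn G X i))))
        ≤ #I * (16 * ∑ j ∈ I.erase i, #(nbrsIn C (nbrsIn G X i) j)) := by
          gcongr; exact card_biUnion_le
      _ = ∑ j ∈ I.erase i, 16 * #I * #(nbrsIn C (nbrsIn G X i) j) := by rw [← mul_sum]; ring
      _ ≤ #(I.erase i) • D := sum_le_card_nsmul _ _ _ hsmall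
      _ ≤ #I * D := Nat.mul_le_mul_right _ (card_erase_le)
  have := le_card_sdiff ((I.erase i).biUnion (nbrsIn C (nbrsIn G X i))) (nbrsIn G X i)
  rw [privateNbrs, ← hC]
  omega

open scoped Classical in
theorem exists_blockSystem {m : ℕ} (hD : 0 < D) (hdeg : ∀ v ∈ X, #(nbrsIn G X v) ≤ D)
    (hlam : D ≤ Q * (lam + 1)) (hreg : #X ≤ 2 * #{v ∈ X | D ≤ 8 * #(nbrsIn G X v)})
    (hX : 2 * (m * (D + 2 * (16 * m * (D + D * Q)) + 1)) ≤ #X) :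
    ∃ (I : Finset V) (S : V → Finset V) (N : ℕ), BlockSystem G I S lam ∧ #I = m ∧
      (∀ i, S i ⊆ X) ∧ (∀ i ∈ I, #(S i) = N) ∧ D ≤ 16 * N := by
  obtain ⟨I, hIX, hI, rfl⟩ := exists_isIndepSet_of_card_nbrsIn_le
    (G := clashGraph G X lam D (16 * m)) m {v ∈ X | D ≤ 8 * #(nbrsIn G X v)}
    (fun v hv => (card_le_card (nbrsIn_mono (filter_subset _ _))).trans
      (card_nbrsIn_clashGraph_le hD hdeg hlam _ (mem_filter.1 hv).1)) (by omega)
  have hprivate : ∀ i ∈ I, D ≤ 16 * #(privateNbrs G X lam I i) := fun i hi =>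
    le_mul_card_privateNbrs hI hi (mem_filter.1 (hIX hi)).2
  have hS : ∀ i, ∃ T ⊆ privateNbrs G X lam I i, i ∈ I → #T = (D + 15) / 16 := fun i => by
    by_cases hi : i ∈ I
    · obtain ⟨T, hT, hTc⟩ := exists_subset_card_eq (s := privateNbrs G X lam I i)
        (n := (D + 15) / 16) (by have := hprivate i hi; omega)
      exact ⟨T, hT, fun _ => hTc⟩
    · exact ⟨∅, empty_subset _, fun h => absurd h hi⟩
  choose S hSsub hS using hS
  have hIG : G.IsIndepSet (I : Set V) := hI.mono' fun _ _ h hadj => h (.inl hadj)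
  exact ⟨I, S, (D + 15) / 16,
    (blockSystem_privateNbrs hIG).mono subset_rfl (fun i _ => hSsub i) le_rfl, rfl,
    fun i => (hSsub i).trans (privateNbrs_subset.trans nbrsIn_subset), hS, by omega⟩

end Apexes

open scoped Classical in
theorem C7Free.hasAnticompleteFamily_of_pow_le (hG : C7Free G) {X : Finset V} {D q : ℕ}
    (hq : 1000 ≤ q) (hq2 : q ^ 41 ≤ 2 ^ q) (hdeg : ∀ v ∈ X, #(nbrsIn G X v) ≤ D)
    (hreg : #X ≤ 2 * #{v ∈ X | D ≤ 8 * #(nbrsIn G X v)}) (hX : D * q ^ 58 ≤ #X)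
    (hD : q ^ 60 ≤ D) : HasAnticompleteFamily G (fun _ => X) q (D / q ^ 60 + 1) := by
  have hlam : D / q ^ 46 * q ^ 46 ≤ D := Nat.div_mul_le_self _ _
  have hL : (D / q ^ 60 + 1) * q ^ 60 ≤ 2 * D := by
    have := Nat.div_mul_le_self D (q ^ 60)
    rw [add_one_mul]
    omega
  have hXm : 2 * (q ^ 5 * (D + 2 * (16 * q ^ 5 * (D + D * q ^ 46)) + 1)) ≤ #X := by
    have hD1 : 1 ≤ D := (Nat.one_le_pow _ _ (by omega)).trans hD
    have h46 : D ≤ D * q ^ 46 := Nat.le_mul_of_pos_right _ (by positivity)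
    have h51 : D ≤ q ^ 5 * (D * q ^ 46) := h46.trans (Nat.le_mul_of_pos_left _ (by positivity))
    calc 2 * (q ^ 5 * (D + 2 * (16 * q ^ 5 * (D + D * q ^ 46)) + 1))
        = 2 * (q ^ 5 * (D + 32 * (q ^ 5 * (D + D * q ^ 46)) + 1)) := by ring
      _ ≤ 2 * (q ^ 5 * (D + 32 * (q ^ 5 * (D * q ^ 46 + D * q ^ 46)) + D)) := by gcongr
      _ = 2 * (q ^ 5 * (2 * D + 64 * (q ^ 5 * (D * q ^ 46)))) := by ring
      _ ≤ 2 * (q ^ 5 * (66 * (q ^ 5 * (D * q ^ 46)))) := by gcongr; omega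
      _ = 132 * (D * q ^ 56) := by ring
      _ ≤ q ^ 2 * (D * q ^ 56) := by gcongr; nlinarith
      _ = D * q ^ 58 := by ring
      _ ≤ #X := hX
  obtain ⟨I, S, N, hS, hI, hSX, hN, hDN⟩ := exists_blockSystem
    (lt_of_lt_of_le (by positivity) hD) hdeg (Q := q ^ 46) (lam := D / q ^ 46) (by
      rw [mul_add_one, mul_comm]
      exact (Nat.lt_div_mul_add (by positivity)).le) hreg hXm
  refine (hS.hasAnticompleteFamily hG hq hq2 hN ?_ ?_ ?_ hI.ge).mono hSX
  · have : D / q ^ 46 * q ^ 46 = q * (D / q ^ 46 * q ^ 45) := by ring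
    nlinarith
  · have : (D / q ^ 60 + 1) * q ^ 60 = q ^ 14 * ((D / q ^ 60 + 1) * q ^ 46) := by ring
    have : q ≤ q ^ 14 := Nat.le_self_pow (by norm_num) q
    nlinarith [Nat.zero_le ((D / q ^ 60 + 1) * q ^ 46)]
  · have : q ^ 60 = q ^ 13 * q ^ 47 := by ring
    have : q ≤ q ^ 13 := Nat.le_self_pow (by norm_num) q
    nlinarith [Nat.zero_le (q ^ 47)]

open scoped Classical in
theorem C7Free.hasAnticompleteFamily (hG : C7Free G) {X : Finset V} {D q : ℕ} (hD : 0 < D)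
    (hq : 1000 ≤ q) (hq2 : q ^ 41 ≤ 2 ^ q) (hdeg : ∀ v ∈ X, #(nbrsIn G X v) ≤ D)
    (hreg : 8 ≤ D → #X ≤ 2 * #{v ∈ X | D ≤ 8 * #(nbrsIn G X v)}) (hX : D * q ^ 58 ≤ #X) :
    HasAnticompleteFamily G (fun _ => X) q (D / q ^ 60 + 1) := by
  obtain hDq | hDq := lt_or_ge D (q ^ 60)
  · have hqX : q * (D + 1) ≤ #X :=
      calc q * (D + 1) ≤ q * (D * q) := by gcongr; nlinarith
        _ = D * q ^ 2 := by ring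
        _ ≤ D * q ^ 58 := by gcongr <;> omega
        _ ≤ #X := hX
    obtain ⟨I, hIX, hI, hIq⟩ := exists_isIndepSet_of_card_nbrsIn_le q X hdeg hqX
    refine ⟨I, fun i => {i}, hIq, fun i hi => ⟨singleton_subset_iff.2 (hIX hi), ?_⟩, ?_⟩
    · rw [Nat.div_eq_of_lt hDq, card_singleton]
    · intro i hi j hj hij a ha b hb
      rw [mem_singleton.1 ha, mem_singleton.1 hb]
      exact ⟨hij, hI hi hj hij⟩
  · have : q ≤ q ^ 60 := Nat.le_self_pow (by norm_num) q
    exact hG.hasAnticompleteFamily_of_pow_le hq hq2 hdeg (hreg (by omega)) hX hDq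

theorem exists_embedding_cons {n : ℕ} {F : SimpleGraph (Fin (n + 1))}
    (f : F.comap Fin.succ ↪g G) {v : V} (hne : ∀ j, v ≠ f j)
    (hadj : ∀ j, G.Adj v (f j) ↔ F.Adj 0 j.succ) :
    ∃ g : F ↪g G, g 0 = v ∧ ∀ j, g j.succ = f j := by
  refine ⟨⟨⟨Fin.cons v f, Fin.cons_injective_iff.2 ⟨?_, f.injective⟩⟩, ?_⟩, rfl, fun _ => rfl⟩
  · rintro ⟨j, hj⟩
    exact hne j hj.symm
  · intro i j
    cases i using Fin.cases <;> cases j using Fin.cases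
    · simp
    · simpa using hadj _
    · simpa [adj_comm] using hadj _
    · simp

theorem exists_forall_card_lt_mul_card_nbrsIn {n y p : ℕ} {A : Finset V} {B : Fin n → Finset V}
    {K : Fin n → SimpleGraph V} (hA : n * y < #A)
    (hdense : ∀ j, ∀ A' ⊆ A, y < #A' → ∃ a ∈ A', #(B j) < p * #(nbrsIn (K j) (B j) a)) :
    ∃ v ∈ A, ∀ j, #(B j) < p * #(nbrsIn (K j) (B j) v) := by
  classical
  set bad : Fin n → Finset V := fun j => {v ∈ A | p * #(nbrsIn (K j) (B j) v) ≤ #(B j)}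
  have card_bad_le : ∀ j, #(bad j) ≤ y := fun j => by
    by_contra! hy
    obtain ⟨a, ha, hlt⟩ := hdense j (bad j) (filter_subset _ _) hy
    exact (mem_filter.1 ha).2.not_gt hlt
  obtain ⟨v, hv, hvbad⟩ : ∃ v ∈ A, v ∉ univ.biUnion bad :=
    exists_mem_notMem_of_card_lt_card <|
      calc #(univ.biUnion bad) ≤ n * y := by
            simpa using card_biUnion_le_card_mul univ bad _ fun j _ => card_bad_le j
        _ < #A := hA
  refine ⟨v, hv, fun j => ?_⟩
  by_contra! hle
  exact hvbad (mem_biUnion.2 ⟨j, mem_univ _, mem_filter.2 ⟨hv, hle⟩⟩)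

theorem exists_embedding_mem {U : Finset V} {y p : ℕ} (hp : 0 < p)
    (hU : ∀ H : SimpleGraph V, H = G ∨ H = Gᶜ → ∀ A ⊆ U, ∀ B ⊆ U, y ≤ #A → y ≤ #B →
      ∃ a ∈ A, #B < p * #(nbrsIn H B a)) :
    ∀ (n : ℕ) (F : SimpleGraph (Fin n)) (W : Fin n → Finset V), (∀ i, W i ⊆ U) →
      (∀ i, n * y * p ^ n < #(W i)) → ∃ f : F ↪g G, ∀ i, f i ∈ W i := by
  classical
  intro n
  induction n with
  | zero => exact fun F W _ _ => ⟨⟨.ofIsEmpty, fun {i} => i.elim0⟩, fun i => i.elim0⟩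
  | succ n ih =>
    intro F W hWU hW
    set K : Fin n → SimpleGraph V := fun j => if F.Adj 0 j.succ then G else Gᶜ with hK
    have lt_card_W : ∀ i, (n + 1) * y < #(W i) := fun i =>
      (Nat.le_mul_of_pos_right _ (by positivity)).trans_lt (hW i)
    obtain ⟨v, hv, hvK⟩ := exists_forall_card_lt_mul_card_nbrsIn (n := n) (A := W 0) (y := y)
      (B := fun j => W j.succ) (K := K) (p := p) (by have := lt_card_W 0; nlinarith)
      fun j A hA hy => hU (K j) (by simp only [hK]; split_ifs <;> simp) A (hA.trans (hWU 0))
        (W j.succ) (hWU _) hy.le (by have := lt_card_W j.succ; nlinarith)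
    obtain ⟨f, hf⟩ := ih (F.comap Fin.succ) (fun j => nbrsIn (K j) (W j.succ) v)
      (fun j => nbrsIn_subset.trans (hWU _)) fun j => lt_of_mul_lt_mul_left (a := p)
        (calc p * (n * y * p ^ n) = n * y * p ^ (n + 1) := by ring
          _ ≤ (n + 1) * y * p ^ (n + 1) := by gcongr; omega
          _ < p * #(nbrsIn (K j) (W j.succ) v) := (hW j.succ).trans (hvK j)) (Nat.zero_le _)
    have hvf : ∀ j, v ≠ f j ∧ (G.Adj v (f j) ↔ F.Adj 0 j.succ) := fun j => by
      have hadj := (mem_nbrsIn.1 (hf j)).2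
      by_cases h0j : F.Adj 0 j.succ <;> simp only [hK, h0j, if_true, if_false] at hadj
      · exact ⟨hadj.ne, iff_of_true hadj h0j⟩
      · exact ⟨hadj.ne, iff_of_false hadj.2 h0j⟩
    obtain ⟨g, hg0, hg⟩ := exists_embedding_cons f (fun j => (hvf j).1) fun j => (hvf j).2
    exact ⟨g, Fin.cases (hg0 ▸ hv) fun j => hg j ▸ nbrsIn_subset (hf j)⟩

theorem exists_sparse_pair {n : ℕ} {F : SimpleGraph (Fin n)} (hF : ¬ F ⊴ G) {U : Finset V}
    {y p : ℕ} (hp : 0 < p) (hU : n * (4 * y) * p ^ n < #U) :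
    ∃ H, (H = G ∨ H = Gᶜ) ∧ ∃ A ⊆ U, ∃ B ⊆ U, Disjoint A B ∧ #A = y ∧ 2 * y ≤ #B ∧
      ∀ a ∈ A, p * #(nbrsIn H B a) ≤ 2 * #B := by
  classical
  obtain ⟨H, hH, A, hA, B, hB, hAy, hBy, hAB⟩ : ∃ H, (H = G ∨ H = Gᶜ) ∧ ∃ A ⊆ U, ∃ B ⊆ U,
      4 * y ≤ #A ∧ 4 * y ≤ #B ∧ ∀ a ∈ A, p * #(nbrsIn H B a) ≤ #B := by
    by_contra! hdense
    obtain ⟨f, -⟩ := exists_embedding_mem hp hdense n F (fun _ => U) (fun _ => subset_rfl)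
      fun _ => hU
    exact hF ⟨f⟩
  obtain ⟨A', hA', hA'y⟩ := exists_subset_card_eq (s := A) (n := y) (by omega)
  have hcard : #B - #A' ≤ #(B \ A') := le_card_sdiff A' B
  refine ⟨H, hH, A', hA'.trans hA, B \ A', sdiff_subset.trans hB, disjoint_sdiff, hA'y, by omega,
    fun a ha => ?_⟩
  calc p * #(nbrsIn H (B \ A') a) ≤ p * #(nbrsIn H B a) :=
        Nat.mul_le_mul_left _ (card_le_card (nbrsIn_mono sdiff_subset))
    _ ≤ #B := hAB a (hA' ha)
    _ ≤ 2 * #(B \ A') := by omega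

/-- Twice the number of edges of `G` inside `X`. -/
noncomputable def degSum (G : SimpleGraph V) (X : Finset V) : ℕ := ∑ x ∈ X, #(nbrsIn G X x)

theorem degSum_le_sq (X : Finset V) : degSum G X ≤ #X ^ 2 :=
  (sum_le_card_nsmul _ _ #X fun _ _ => card_le_card nbrsIn_subset).trans_eq (sq _).symm

open scoped Classical in
theorem degSum_union_le {X Y : Finset V} (h : Disjoint X Y) :
    degSum G (X ∪ Y) ≤ degSum G X + 2 * ∑ y ∈ Y, #(nbrsIn G X y) + #Y ^ 2 := by
  have hunion : ∀ x, #(nbrsIn G (X ∪ Y) x) ≤ #(nbrsIn G X x) + #(nbrsIn G Y x) := fun x => by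
    rw [nbrsIn, filter_union]
    exact card_union_le _ _
  calc degSum G (X ∪ Y) ≤ ∑ x ∈ X, (#(nbrsIn G X x) + #(nbrsIn G Y x)) +
        ∑ y ∈ Y, (#(nbrsIn G X y) + #(nbrsIn G Y y)) := by
        rw [degSum, sum_union h]
        exact Nat.add_le_add (sum_le_sum fun x _ => hunion x) (sum_le_sum fun y _ => hunion y)
    _ = degSum G X + 2 * ∑ y ∈ Y, #(nbrsIn G X y) + degSum G Y := by
        rw [sum_add_distrib, sum_add_distrib, sum_card_nbrsIn_comm X Y, degSum, degSum]
        ring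
    _ ≤ degSum G X + 2 * ∑ y ∈ Y, #(nbrsIn G X y) + #Y ^ 2 := by gcongr; exact degSum_le_sq Y

/-- `X` has as many vertices as `a` disjoint sets of size `s`, and no more edges than if the pairs
of distinct sets had density at most `1 / p`. -/
structure HasSparseParts (G : SimpleGraph V) (p a s : ℕ) (X : Finset V) : Prop where
  card_eq : #X = a * s
  mul_degSum_le : p * degSum G X ≤ (a * p + a ^ 2) * s ^ 2

/-- In every graph without an induced copy of `F`, each set `U` of at least `k` vertices contains
`a` sparse parts of the graph or `b` sparse parts of its complement, of size at least `#U / k`. -/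
def ForcesSparseParts {n : ℕ} (F : SimpleGraph (Fin n)) (p a b k : ℕ) : Prop :=
  ∀ (V : Type u) (G : SimpleGraph V), ¬ F ⊴ G → ∀ U : Finset V, k ≤ #U → ∃ s, #U ≤ k * s ∧
    ∃ X ⊆ U, HasSparseParts G p a s X ∨ HasSparseParts Gᶜ p b s X

theorem hasSparseParts_one (p : ℕ) (X : Finset V) : HasSparseParts G p 1 #X X where
  card_eq := (one_mul _).symm
  mul_degSum_le := by nlinarith [Nat.mul_le_mul_left p (degSum_le_sq (G := G) X)]

theorem HasSparseParts.exists_succ {X A B : Finset V} {p a s : ℕ} (hX : HasSparseParts G p a s X)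
    (hAB : Disjoint A B) (hXA : X ⊆ A) (hsparse : ∀ x ∈ A, 4 * p * #(nbrsIn G B x) ≤ 2 * #B)
    (hsB : 2 * s ≤ #B) {U : Finset V} (hA : A ⊆ U) (hB : B ⊆ U) :
    ∃ Y ⊆ U, HasSparseParts G p (a + 1) s Y := by
  classical
  set bad := {b ∈ B | a * s < p * #(nbrsIn G X b)}
  have hbad : 2 * #bad ≤ #B := by
    refine le_of_mul_le_mul_left (a := 2 * (a * s + 1)) ?_ (by positivity)
    calc 2 * (a * s + 1) * (2 * #bad) = 4 * ((a * s + 1) * #bad) := by ring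
      _ ≤ 4 * ∑ b ∈ B, p * #(nbrsIn G X b) := Nat.mul_le_mul_left _ mul_card_filter_lt_le
      _ = ∑ x ∈ X, 4 * p * #(nbrsIn G B x) := by
        rw [← mul_sum, sum_card_nbrsIn_comm, ← mul_sum, mul_assoc]
      _ ≤ #X • (2 * #B) := sum_le_card_nsmul _ _ _ fun x hx => hsparse x (hXA hx)
      _ = 2 * (a * s) * #B := by rw [hX.card_eq, smul_eq_mul]; ring
      _ ≤ 2 * (a * s + 1) * #B := by gcongr; omega
  obtain ⟨C, hC, hCs⟩ := exists_subset_card_eq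
    (s := {b ∈ B | ¬ a * s < p * #(nbrsIn G X b)}) (n := s) (by
      have : #bad + #{b ∈ B | ¬ a * s < p * #(nbrsIn G X b)} = #B :=
        card_filter_add_card_filter_not _
      omega)
  have hCB : C ⊆ B := hC.trans (filter_subset _ _)
  have hXC : Disjoint X C := hAB.mono hXA hCB
  have hcross : p * ∑ c ∈ C, #(nbrsIn G X c) ≤ a * s ^ 2 :=
    calc p * ∑ c ∈ C, #(nbrsIn G X c) = ∑ c ∈ C, p * #(nbrsIn G X c) := mul_sum _ _ _
      _ ≤ #C • (a * s) := sum_le_card_nsmul _ _ _ fun c hc => not_lt.1 (mem_filter.1 (hC hc)).2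
      _ = a * s ^ 2 := by rw [hCs, smul_eq_mul]; ring
  refine ⟨X ∪ C, union_subset (hXA.trans hA) (hCB.trans hB), ?_, ?_⟩
  · rw [card_union_of_disjoint hXC, hX.card_eq, hCs]
    ring
  · calc p * degSum G (X ∪ C)
        ≤ p * (degSum G X + 2 * ∑ c ∈ C, #(nbrsIn G X c) + s ^ 2) :=
          Nat.mul_le_mul_left _ (hCs ▸ degSum_union_le hXC)
      _ = p * degSum G X + 2 * (p * ∑ c ∈ C, #(nbrsIn G X c)) + p * s ^ 2 := by ring
      _ ≤ (a * p + a ^ 2) * s ^ 2 + 2 * (a * s ^ 2) + p * s ^ 2 := by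
        have := hX.mul_degSum_le
        omega
      _ ≤ ((a + 1) * p + (a + 1) ^ 2) * s ^ 2 := by nlinarith [sq_nonneg s]

theorem exists_sparse_pair_of_mul_le {n : ℕ} {F : SimpleGraph (Fin n)} (hF : ¬ F ⊴ G)
    {U : Finset V} {p P k : ℕ} (hp : 0 < p) (hk : 0 < k) (hP : P = 4 * (n + 1) * p ^ n)
    (hU : 2 * P * k ≤ #U) :
    ∃ H, (H = G ∨ H = Gᶜ) ∧ ∃ A ⊆ U, ∃ B ⊆ U, Disjoint A B ∧ k ≤ #A ∧ #U ≤ 2 * P * #A ∧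
      2 * #A ≤ #B ∧ ∀ a ∈ A, p * #(nbrsIn H B a) ≤ 2 * #B := by
  have hP0 : 0 < P := by rw [hP]; positivity
  set y := #U / P with hy
  have hyP : y * P ≤ #U := Nat.div_mul_le_self _ _
  have hky : k ≤ y := by
    rw [hy, Nat.le_div_iff_mul_le hP0]
    nlinarith [Nat.zero_le (P * k)]
  have hUy : #U ≤ 2 * P * y := by
    have : #U < y * P + P := Nat.lt_div_mul_add hP0
    nlinarith
  obtain ⟨H, hH, A, hA, B, hB, hAB, hAy, hBy, hsparse⟩ := exists_sparse_pair hF hp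
    (show n * (4 * y) * p ^ n < #U from
      calc n * (4 * y) * p ^ n < (n + 1) * (4 * y) * p ^ n := by gcongr <;> omega
        _ = y * P := by rw [hP]; ring
        _ ≤ #U := hyP)
  exact ⟨H, hH, A, hA, B, hB, hAB, hAy ▸ hky, hAy ▸ hUy, hAy ▸ hBy, hsparse⟩

theorem ForcesSparseParts.succ_succ {n : ℕ} {F : SimpleGraph (Fin n)} {p a b k₁ k₂ : ℕ}
    (hp : 0 < p) (ha : 0 < a) (hb : 0 < b) (hk : 0 < k₁ + k₂)
    (h₁ : ForcesSparseParts.{u} F p a (b + 1) k₁) (h₂ : ForcesSparseParts.{u} F p (a + 1) b k₂) :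
    ForcesSparseParts.{u} F p (a + 1) (b + 1) (2 * (4 * (n + 1) * (4 * p) ^ n) * (k₁ + k₂)) := by
  intro V G hF U hU
  set P := 4 * (n + 1) * (4 * p) ^ n with hP
  obtain ⟨H, hH, A, hA, B, hB, hAB, hkA, hUA, hBA, hsparse⟩ :=
    exists_sparse_pair_of_mul_le hF (by positivity) hk hP hU
  have hUs : ∀ {s k}, k ≤ k₁ + k₂ → #A ≤ k * s → #U ≤ 2 * P * (k₁ + k₂) * s :=
    fun {s k} hk hA =>
      calc #U ≤ 2 * P * #A := hUA
        _ ≤ 2 * P * ((k₁ + k₂) * s) := by gcongr; exact hA.trans (by gcongr)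
        _ = 2 * P * (k₁ + k₂) * s := by ring
  have hsB : ∀ {K : SimpleGraph V} {X : Finset V} {c s}, 0 < c → X ⊆ A →
      HasSparseParts K p c s X → 2 * s ≤ #B := fun {K X c s} hc hXA hX => by
    have := hX.card_eq ▸ card_le_card hXA
    have : s ≤ c * s := Nat.le_mul_of_pos_left _ hc
    omega
  obtain rfl | rfl := hH
  · obtain ⟨s, hs, X, hXA, hX⟩ := h₁ V H hF A (by omega)
    refine ⟨s, hUs (by omega) hs, ?_⟩
    obtain hX | hX := hX
    · obtain ⟨Y, hYU, hY⟩ := hX.exists_succ hAB hXA hsparse (hsB ha hXA hX) hA hB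
      exact ⟨Y, hYU, .inl hY⟩
    · exact ⟨X, hXA.trans hA, .inr hX⟩
  · obtain ⟨s, hs, X, hXA, hX⟩ := h₂ V G hF A (by omega)
    refine ⟨s, hUs (by omega) hs, ?_⟩
    obtain hX | hX := hX
    · exact ⟨X, hXA.trans hA, .inl hX⟩
    · obtain ⟨Y, hYU, hY⟩ := hX.exists_succ hAB hXA hsparse (hsB hb hXA hX) hA hB
      exact ⟨Y, hYU, .inr hY⟩

theorem exists_forcesSparseParts {n : ℕ} (F : SimpleGraph (Fin n)) {p : ℕ} (hp : 0 < p)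
    (a b : ℕ) : ∃ k, 0 < k ∧ ForcesSparseParts.{u} F p (a + 1) (b + 1) k := by
  induction a generalizing b with
  | zero => exact ⟨1, one_pos, fun V G _ U _ =>
      ⟨#U, by simp, U, subset_rfl, .inl (hasSparseParts_one p U)⟩⟩
  | succ a iha =>
    induction b with
    | zero => exact ⟨1, one_pos, fun V G _ U _ =>
        ⟨#U, by simp, U, subset_rfl, .inr (hasSparseParts_one p U)⟩⟩
    | succ b ihb =>
      obtain ⟨k₁, hk₁, h₁⟩ := iha (b + 1)
      obtain ⟨k₂, -, h₂⟩ := ihb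
      exact ⟨_, by positivity, h₁.succ_succ hp a.succ_pos b.succ_pos (by omega) h₂⟩

theorem exists_subset_forall_mul_card_nbrsIn_le {X : Finset V} {E : ℕ}
    (hX : 4 * E * degSum G X ≤ #X ^ 2) :
    ∃ Y ⊆ X, #X ≤ 2 * #Y ∧ ∀ v ∈ Y, E * #(nbrsIn G Y v) ≤ #Y := by
  classical
  set bad := {v ∈ X | #X < 2 * E * #(nbrsIn G X v)}
  set Y := {v ∈ X | ¬ #X < 2 * E * #(nbrsIn G X v)}
  have hYX : Y ⊆ X := filter_subset _ _
  have hbad : 2 * #bad ≤ #X := by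
    refine le_of_mul_le_mul_left (a := #X + 1) ?_ (Nat.succ_pos _)
    calc (#X + 1) * (2 * #bad) = 2 * ((#X + 1) * #bad) := by ring
      _ ≤ 2 * ∑ v ∈ X, 2 * E * #(nbrsIn G X v) := Nat.mul_le_mul_left _ mul_card_filter_lt_le
      _ = 4 * E * degSum G X := by rw [← mul_sum, degSum]; ring
      _ ≤ #X ^ 2 := hX
      _ ≤ (#X + 1) * #X := by nlinarith
  have hXY : #X ≤ 2 * #Y := by
    have : #bad + #Y = #X := card_filter_add_card_filter_not _
    omega
  refine ⟨Y, hYX, hXY, fun v hv => ?_⟩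
  have : 2 * (E * #(nbrsIn G Y v)) ≤ 2 * #Y :=
    calc 2 * (E * #(nbrsIn G Y v)) = 2 * E * #(nbrsIn G Y v) := by ring
      _ ≤ 2 * E * #(nbrsIn G X v) := by gcongr; exact nbrsIn_mono hYX
      _ ≤ #X := not_lt.1 (mem_filter.1 hv).2
      _ ≤ 2 * #Y := hXY
  omega

/-- **Rödl's theorem**. -/
theorem exists_sparse_subset {n : ℕ} (F : SimpleGraph (Fin n)) {E : ℕ} (hE : 0 < E) :
    ∃ k, 0 < k ∧ ∀ (V : Type u) (G : SimpleGraph V), ¬ F ⊴ G → ∀ U : Finset V, k ≤ #U →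
      ∃ H, (H = G ∨ H = Gᶜ) ∧ ∃ X ⊆ U, #U ≤ k * #X ∧ ∀ v ∈ X, E * #(nbrsIn H X v) ≤ #X := by
  obtain ⟨k, hk, h⟩ := exists_forcesSparseParts.{u} F (p := 8 * E) (by omega) (8 * E - 1)
    (8 * E - 1)
  rw [Nat.sub_add_cancel (by omega)] at h
  refine ⟨2 * k, by omega, fun V G hF U hU => ?_⟩
  obtain ⟨s, hs, X, hXU, hX⟩ := h V G hF U (by omega)
  obtain ⟨H, hH, hX⟩ : ∃ H, (H = G ∨ H = Gᶜ) ∧ HasSparseParts H (8 * E) (8 * E) s X := by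
    obtain hX | hX := hX
    · exact ⟨G, .inl rfl, hX⟩
    · exact ⟨Gᶜ, .inr rfl, hX⟩
  obtain ⟨Y, hYX, hXY, hY⟩ := exists_subset_forall_mul_card_nbrsIn_le
    (G := H) (X := X) (E := E) <| by
    refine le_of_mul_le_mul_left (a := 2) ?_ two_pos
    calc 2 * (4 * E * degSum H X) = 8 * E * degSum H X := by ring
      _ ≤ (8 * E * (8 * E) + (8 * E) ^ 2) * s ^ 2 := hX.mul_degSum_le
      _ = 2 * #X ^ 2 := by rw [hX.card_eq]; ring
  refine ⟨H, hH, Y, hYX.trans hXU, ?_, hY⟩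
  calc #U ≤ k * s := hs
    _ ≤ k * #X := by gcongr; rw [hX.card_eq]; exact Nat.le_mul_of_pos_left _ (by omega)
    _ ≤ k * (2 * #Y) := by gcongr
    _ = 2 * k * #Y := by ring

/-- The largest degree inside `X`, rounded up to `1` if there are no edges, so that one can
divide by it. -/
noncomputable def maxDeg (G : SimpleGraph V) (X : Finset V) : ℕ :=
  max 1 (X.sup fun v => #(nbrsIn G X v))

theorem maxDeg_pos (X : Finset V) : 0 < maxDeg G X :=
  lt_of_lt_of_le one_pos (le_max_left _ _)

theorem card_nbrsIn_le_maxDeg {X : Finset V} {v : V} (hv : v ∈ X) :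
    #(nbrsIn G X v) ≤ maxDeg G X :=
  (le_sup (f := fun v => #(nbrsIn G X v)) hv).trans (le_max_right _ _)

theorem mul_maxDeg_le {X : Finset V} {c m : ℕ} (hcm : c ≤ m)
    (hdeg : ∀ v ∈ X, c * #(nbrsIn G X v) ≤ m) : c * maxDeg G X ≤ m := by
  obtain rfl | hX := X.eq_empty_or_nonempty
  · simpa [maxDeg] using hcm
  obtain ⟨v, hv, hmax⟩ := exists_mem_eq_sup X hX fun v => #(nbrsIn G X v)
  rw [maxDeg, hmax, ← Nat.mul_max_mul_left, mul_one]
  exact max_le hcm (hdeg v hv)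

theorem exists_minimal_maxDeg_div_sq {X₀ : Finset V} (hX₀ : X₀.Nonempty) :
    ∃ X ⊆ X₀, X.Nonempty ∧
      ∀ Y ⊆ X₀, Y.Nonempty → maxDeg G X * #Y ^ 2 ≤ maxDeg G Y * #X ^ 2 := by
  classical
  obtain ⟨X, hX, hmin⟩ := exists_min_image {X ∈ X₀.powerset | X.Nonempty}
    (fun X => (maxDeg G X : ℝ) / #X ^ 2) ⟨X₀, by simpa using hX₀⟩
  obtain ⟨hXX₀, hXne⟩ := mem_filter.1 hX
  refine ⟨X, mem_powerset.1 hXX₀, hXne, fun Y hY hYne => ?_⟩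
  have _ : (0 : ℝ) < #X := mod_cast hXne.card_pos
  have _ : (0 : ℝ) < #Y := mod_cast hYne.card_pos
  have hXY := hmin Y (mem_filter.2 ⟨mem_powerset.2 hY, hYne⟩)
  rw [div_le_div_iff₀ (by positivity) (by positivity)] at hXY
  exact_mod_cast hXY

open scoped Classical in
theorem card_le_two_mul_card_of_minimal_maxDeg {X : Finset V} (h8 : 8 ≤ maxDeg G X)
    (hmin : ∀ Y ⊆ X, Y.Nonempty → maxDeg G X * #Y ^ 2 ≤ maxDeg G Y * #X ^ 2) :
    #X ≤ 2 * #{v ∈ X | maxDeg G X ≤ 8 * #(nbrsIn G X v)} := by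
  by_contra! hfew
  set Y : Finset V := {v ∈ X | ¬ maxDeg G X ≤ 8 * #(nbrsIn G X v)} with hY
  have hsplit : #{v ∈ X | maxDeg G X ≤ 8 * #(nbrsIn G X v)} + #Y = #X :=
    card_filter_add_card_filter_not _
  have hXY : #X < 2 * #Y := by omega
  have hYX : Y ⊆ X := filter_subset _ _
  have hdegY : 8 * maxDeg G Y ≤ maxDeg G X := by
    refine mul_maxDeg_le h8 fun v hv => ?_
    have hlow := (mem_filter.1 hv).2
    have hmono := card_le_card (nbrsIn_mono (G := G) hYX (v := v))
    omega
  have hlt : maxDeg G X * #X ^ 2 < maxDeg G X * #X ^ 2 :=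
    calc maxDeg G X * #X ^ 2 < maxDeg G X * (2 * #Y) ^ 2 := by
          gcongr
      _ = 4 * (maxDeg G X * #Y ^ 2) := by ring
      _ ≤ 4 * (maxDeg G Y * #X ^ 2) :=
          Nat.mul_le_mul_left 4 (hmin Y hYX (card_pos.1 (by omega)))
      _ ≤ 8 * maxDeg G Y * #X ^ 2 := by nlinarith [Nat.zero_le (maxDeg G Y * #X ^ 2)]
      _ ≤ maxDeg G X * #X ^ 2 := by gcongr
  exact hlt.false

open scoped Classical in
theorem exists_nearly_regular_subset {X₀ : Finset V} {E : ℕ} (hE : 0 < E) (hX₀ : E ≤ #X₀)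
    (hsparse : ∀ v ∈ X₀, E * #(nbrsIn G X₀ v) ≤ #X₀) :
    ∃ X ⊆ X₀, E * maxDeg G X ≤ #X ∧ maxDeg G X * #X₀ ≤ #X ^ 2 ∧
      (8 ≤ maxDeg G X → #X ≤ 2 * #{v ∈ X | maxDeg G X ≤ 8 * #(nbrsIn G X v)}) := by
  have hX₀pos : 0 < #X₀ := by omega
  obtain ⟨X, hXX₀, -, hmin⟩ := exists_minimal_maxDeg_div_sq (G := G) (card_pos.1 hX₀pos)
  have hbound : E * maxDeg G X * #X₀ ≤ #X ^ 2 := by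
    refine le_of_mul_le_mul_right ?_ hX₀pos
    calc E * maxDeg G X * #X₀ * #X₀ = E * (maxDeg G X * #X₀ ^ 2) := by ring
      _ ≤ E * (maxDeg G X₀ * #X ^ 2) :=
          Nat.mul_le_mul_left E (hmin X₀ subset_rfl (card_pos.1 hX₀pos))
      _ = E * maxDeg G X₀ * #X ^ 2 := by ring
      _ ≤ #X₀ * #X ^ 2 := by
          gcongr
          exact mul_maxDeg_le hX₀ hsparse
      _ = #X ^ 2 * #X₀ := by ring
  refine ⟨X, hXX₀, ?_, ?_, fun h8 => ?_⟩
  · refine le_of_mul_le_mul_right (hbound.trans ?_) hX₀pos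
    rw [sq]
    gcongr
  · calc maxDeg G X * #X₀ ≤ E * (maxDeg G X * #X₀) := Nat.le_mul_of_pos_left _ hE
      _ = E * maxDeg G X * #X₀ := by ring
      _ ≤ #X ^ 2 := hbound
  · exact card_le_two_mul_card_of_minimal_maxDeg h8 fun Y hY => hmin Y (hY.trans hXX₀)

theorem exists_pow_le_two_pow (k : ℕ) : ∃ q₀ : ℕ, ∀ q ≥ q₀, q ^ k ≤ 2 ^ q := by
  have h := (isLittleO_pow_const_const_pow_of_one_lt (R := ℝ) k one_lt_two).bound one_pos
  obtain ⟨q₀, hq₀⟩ := Filter.eventually_atTop.1 h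
  refine ⟨q₀, fun q hq => ?_⟩
  have hle := hq₀ q hq
  simp only [norm_pow, RCLike.norm_natCast, RCLike.norm_ofNat, one_mul] at hle
  exact_mod_cast hle

theorem exists_mul_pow_le_lt {D N q₀ k : ℕ} (hD : 0 < D) (hk : k ≠ 0) (h : D * q₀ ^ k ≤ N) :
    ∃ q ≥ q₀, D * q ^ k ≤ N ∧ N < D * (q + 1) ^ k := by
  have le_N : ∀ q, D * q ^ k ≤ N → q ≤ N := fun q hq =>
    (Nat.le_self_pow hk q).trans ((Nat.le_mul_of_pos_left _ hD).trans hq)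
  refine ⟨Nat.findGreatest (fun q => D * q ^ k ≤ N) N, Nat.le_findGreatest (le_N _ h) h,
    Nat.findGreatest_spec (P := fun q => D * q ^ k ≤ N) (le_N _ h) h, ?_⟩
  by_contra! hle
  have := Nat.le_findGreatest (P := fun q => D * q ^ k ≤ N) (le_N _ hle) hle
  omega

theorem le_pow_mul_div_add_one {N M D q : ℕ} (hD : 0 < D) (hq : 2 ≤ q) (hDN : D * N ≤ M ^ 2)
    (hM : M ≤ D * (q + 1) ^ 58) : N ≤ q ^ 292 * (D / q ^ 60 + 1) := by
  have hN : N ≤ q ^ 232 * D := by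
    refine le_of_mul_le_mul_left ?_ hD
    calc D * N ≤ M ^ 2 := hDN
      _ ≤ (D * (q ^ 2) ^ 58) ^ 2 := by
          refine Nat.pow_le_pow_left (hM.trans ?_) 2
          gcongr
          nlinarith
      _ = D * (q ^ 232 * D) := by ring
  calc N ≤ q ^ 232 * D := hN
    _ ≤ q ^ 232 * (q ^ 60 * (D / q ^ 60 + 1)) :=
        Nat.mul_le_mul_left _ (Nat.lt_mul_div_succ D (by positivity)).le
    _ = q ^ 292 * (D / q ^ 60 + 1) := by ring

theorem C7Free.exists_hasAnticompleteFamily_of_sparse (hG : C7Free G) {X₀ : Finset V} {q₀ : ℕ}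
    (hq₀ : 1000 ≤ q₀) (hpow : ∀ q ≥ q₀, q ^ 41 ≤ 2 ^ q) (hX₀ : q₀ ^ 58 ≤ #X₀)
    (hsparse : ∀ v ∈ X₀, q₀ ^ 58 * #(nbrsIn G X₀ v) ≤ #X₀) :
    ∃ q ≥ q₀, ∃ L, #X₀ ≤ q ^ 292 * L ∧ HasAnticompleteFamily G (fun _ => X₀) q L := by
  obtain ⟨X, hXX₀, hqX, hXsq, hreg⟩ := exists_nearly_regular_subset (by positivity) hX₀ hsparse
  have hdeg : ∀ v ∈ X, #(nbrsIn G X v) ≤ maxDeg G X := fun _ => card_nbrsIn_le_maxDeg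
  have hD : 0 < maxDeg G X := maxDeg_pos X
  generalize maxDeg G X = D at *
  obtain ⟨q, hq, hDX, hXD⟩ := exists_mul_pow_le_lt hD (by norm_num) (mul_comm _ D ▸ hqX)
  exact ⟨q, hq, D / q ^ 60 + 1, le_pow_mul_div_add_one hD (by omega) hXsq hXD.le,
    (hG.hasAnticompleteFamily hD (hq₀.trans hq) (hpow q hq) hdeg hreg hDX).mono fun _ => hXX₀⟩

theorem exists_forall_hasAnticompleteFamily : ∃ d n₀ : ℕ, ∀ (V : Type u) (G : SimpleGraph V),
    C7Free G → C7Free Gᶜ → ∀ U : Finset V, n₀ ≤ #U → ∃ H, (H = G ∨ H = Gᶜ) ∧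
      ∃ q L, 2 ≤ q ∧ #U ≤ q ^ d * L ∧ HasAnticompleteFamily H (fun _ => U) q L := by
  obtain ⟨q₁, hq₁⟩ := exists_pow_le_two_pow 41
  obtain ⟨q₀, hq₁₀, hq₀⟩ : ∃ q₀, q₁ ≤ q₀ ∧ 1000 ≤ q₀ :=
    ⟨max q₁ 1000, le_max_left _ _, le_max_right _ _⟩
  have hE : 0 < q₀ ^ 58 := by positivity
  obtain ⟨k, hk, hrodl⟩ := exists_sparse_subset.{u} (cycleGraph 7) hE
  refine ⟨k + 292, k * q₀ ^ 58, fun V G hG hGc U hU => ?_⟩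
  obtain ⟨H, hH, X, hXU, hUX, hsparse⟩ := hrodl V G hG U
    ((Nat.le_mul_of_pos_right _ hE).trans hU)
  have hHfree : C7Free H := by obtain rfl | rfl := hH <;> assumption
  obtain ⟨q, hq, L, hXL, hfam⟩ := hHfree.exists_hasAnticompleteFamily_of_sparse hq₀
    (fun q hq => hq₁ q (hq₁₀.trans hq)) (Nat.le_of_mul_le_mul_left (hU.trans hUX) hk) hsparse
  refine ⟨H, hH, q, L, by omega, ?_, hfam.mono fun _ => hXU⟩
  calc #U ≤ k * #X := hUX
    _ ≤ q ^ k * (q ^ 292 * L) := Nat.mul_le_mul (Nat.lt_pow_self (by omega)).le hXL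
    _ = q ^ (k + 292) * L := by ring

/-- The set `U` contains an independent set and a clique of `G` whose sizes have product at least
`#U ^ τ`. The product, unlike the maximum, is what survives the induction over anticomplete
families. -/
def HasLargeIndepClique (G : SimpleGraph V) (τ : ℝ) (U : Finset V) : Prop :=
  ∃ W ⊆ U, ∃ K ⊆ U, G.IsIndepSet W ∧ G.IsClique K ∧ (#U : ℝ) ^ τ ≤ #W * #K

theorem HasLargeIndepClique.of_compl {τ : ℝ} {U : Finset V} (h : HasLargeIndepClique Gᶜ τ U) :
    HasLargeIndepClique G τ U := by
  obtain ⟨W, hWU, K, hKU, hW, hK, hle⟩ := h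
  exact ⟨K, hKU, W, hWU, (isClique_compl G).1 hK, (isIndepSet_compl G).1 hW,
    hle.trans_eq (mul_comm _ _)⟩

theorem hasLargeIndepClique_compl {τ : ℝ} {U : Finset V} :
    HasLargeIndepClique Gᶜ τ U ↔ HasLargeIndepClique G τ U :=
  ⟨.of_compl, fun h => .of_compl (by rwa [compl_compl])⟩

theorem hasLargeIndepClique_empty {τ : ℝ} (hτ : τ ≠ 0) : HasLargeIndepClique G τ ∅ :=
  ⟨∅, subset_rfl, ∅, subset_rfl, by simp, by simp, by simp [Real.zero_rpow hτ]⟩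

theorem hasLargeIndepClique_singleton (τ : ℝ) (a : V) : HasLargeIndepClique G τ {a} :=
  ⟨{a}, subset_rfl, {a}, subset_rfl, by simp, by simp, by simp⟩

theorem hasLargeIndepClique_of_rpow_le_two {τ : ℝ} {U : Finset V} (hU : 2 ≤ #U)
    (hτ : (#U : ℝ) ^ τ ≤ 2) : HasLargeIndepClique G τ U := by
  classical
  obtain ⟨a, ha, b, hb, hab⟩ := one_lt_card.1 hU
  have of_not_adj : ∀ H : SimpleGraph V, ¬ H.Adj a b → HasLargeIndepClique H τ U := by
    intro H hadj
    refine ⟨{a, b}, by simp [insert_subset_iff, ha, hb], {a}, by simpa, ?_, by simp, ?_⟩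
    · simpa [IsIndepSet, Set.pairwise_pair, H.adj_comm b a] using fun _ => hadj
    · simpa [card_pair hab] using hτ
  by_cases hadj : G.Adj a b
  · exact .of_compl (of_not_adj Gᶜ fun h => h.2 hadj)
  · exact of_not_adj G hadj

theorem isIndepSet_biUnion [DecidableEq V] {I : Finset V} {T W : V → Finset V}
    (hanti : (I : Set V).Pairwise fun i j => Anticomplete G (T i) (T j))
    (hWT : ∀ i ∈ I, W i ⊆ T i) (hW : ∀ i ∈ I, G.IsIndepSet (W i)) :
    G.IsIndepSet (I.biUnion W) := by
  intro x hx y hy hxy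
  obtain ⟨i, hi, hxi⟩ := mem_biUnion.1 hx
  obtain ⟨j, hj, hyj⟩ := mem_biUnion.1 hy
  obtain rfl | hij := eq_or_ne i j
  · exact hW i hi hxi hyj hxy
  · exact (hanti hi hj hij x (hWT i hi hxi) y (hWT j hj hyj)).2

theorem Anticomplete.disjoint {A B : Finset V} (h : Anticomplete G A B) : Disjoint A B :=
  Finset.disjoint_left.2 fun a ha hb => (h a ha a hb).1 rfl

theorem HasAnticompleteFamily.exists_ssubset {U : Finset V} {q L : ℕ} (hq : 2 ≤ q) (hL : 0 < L)
    (h : HasAnticompleteFamily G (fun _ => U) q L) :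
    ∃ (I : Finset V) (T : V → Finset V), #I = q ∧ (∀ i ∈ I, T i ⊂ U ∧ L ≤ #(T i)) ∧
      (I : Set V).Pairwise fun i j => Anticomplete G (T i) (T j) := by
  obtain ⟨I, T, hI, hT, hanti⟩ := h
  refine ⟨I, T, hI, fun i hi => ⟨(hT i hi).1.ssubset_of_ne fun hTU => ?_, (hT i hi).2⟩, hanti⟩
  obtain ⟨j, hj, hji⟩ := exists_mem_ne (by omega : 1 < #I) i
  obtain ⟨x, hx⟩ := card_pos.1 (hL.trans_le (hT j hj).2)
  exact Finset.disjoint_left.1 (hanti hj hi hji).disjoint hx (hTU ▸ (hT j hj).1 hx)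

theorem rpow_le_mul_rpow {u t q d : ℕ} {τ : ℝ} (hτ : 0 ≤ τ) (hdτ : d * τ ≤ 1) (hq : 1 ≤ q)
    (h : u ≤ q ^ d * t) : (u : ℝ) ^ τ ≤ q * (t : ℝ) ^ τ := by
  have hq' : (1 : ℝ) ≤ q := mod_cast hq
  calc (u : ℝ) ^ τ ≤ ((q : ℝ) ^ d * t) ^ τ := by gcongr; exact_mod_cast h
    _ = (q : ℝ) ^ (d * τ) * (t : ℝ) ^ τ := by
        rw [Real.mul_rpow (by positivity) (by positivity), Real.rpow_natCast_mul (by positivity)]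
    _ ≤ (q : ℝ) ^ (1 : ℝ) * (t : ℝ) ^ τ := by gcongr
    _ = q * (t : ℝ) ^ τ := by rw [Real.rpow_one]

theorem HasAnticompleteFamily.hasLargeIndepClique {U : Finset V} {q L d : ℕ} {τ : ℝ}
    (hτ : 0 ≤ τ) (hdτ : d * τ ≤ 1) (hq : 2 ≤ q) (hL : 0 < L) (hUL : #U ≤ q ^ d * L)
    (hU : HasAnticompleteFamily G (fun _ => U) q L)
    (ih : ∀ T ⊂ U, HasLargeIndepClique G τ T) : HasLargeIndepClique G τ U := by
  classical
  obtain ⟨I, T, hIq, hT, hanti⟩ := hU.exists_ssubset hq hL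
  choose! W hWT K hKT hW hK hle using fun i (hi : i ∈ I) => ih (T i) (hT i hi).1
  obtain ⟨m, hm, hmax⟩ := exists_max_image I (fun i => #(K i)) (card_pos.1 (by omega))
  have hTU : ∀ i ∈ I, T i ⊆ U := fun i hi => (hT i hi).1.subset
  have hdisj : (I : Set V).PairwiseDisjoint W := fun i hi j hj hij =>
    (hanti hi hj hij).disjoint.mono (hWT i hi) (hWT j hj)
  refine ⟨I.biUnion W, biUnion_subset.2 fun i hi => (hWT i hi).trans (hTU i hi), K m,
    (hKT m hm).trans (hTU m hm), isIndepSet_biUnion hanti hWT hW, hK m hm, ?_⟩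
  refine le_of_mul_le_mul_left (a := (q : ℝ)) ?_ (by positivity)
  calc (q : ℝ) * (#U : ℝ) ^ τ = ∑ _i ∈ I, (#U : ℝ) ^ τ := by simp [hIq]
    _ ≤ ∑ i ∈ I, (q : ℝ) * (#(W i) * #(K m)) := by
        refine sum_le_sum fun i hi => ?_
        calc (#U : ℝ) ^ τ ≤ q * (#(T i) : ℝ) ^ τ :=
              rpow_le_mul_rpow hτ hdτ (by omega) (hUL.trans (by gcongr; exact (hT i hi).2))
          _ ≤ q * (#(W i) * #(K i)) := by gcongr; exact hle i hi
          _ ≤ q * (#(W i) * #(K m)) := by gcongr q * (#(W i) * ?_); exact_mod_cast hmax i hi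
    _ = q * (#(I.biUnion W) * #(K m)) := by
        rw [← mul_sum, ← sum_mul, card_biUnion hdisj, Nat.cast_sum]

theorem hasLargeIndepClique_of_forall_hasAnticompleteFamily {d n₀ : ℕ}
    (h : ∀ U : Finset V, n₀ ≤ #U → ∃ H, (H = G ∨ H = Gᶜ) ∧
      ∃ q L, 2 ≤ q ∧ #U ≤ q ^ d * L ∧ HasAnticompleteFamily H (fun _ => U) q L)
    (U : Finset V) : HasLargeIndepClique G (1 / (d + n₀ + 1)) U := by
  induction U using Finset.strongInduction with
  | H U ih =>
  obtain hU | hU | hU : #U = 0 ∨ #U = 1 ∨ 2 ≤ #U := by omega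
  · rw [card_eq_zero.1 hU]
    exact hasLargeIndepClique_empty (by positivity)
  · obtain ⟨a, rfl⟩ := card_eq_one.1 hU
    exact hasLargeIndepClique_singleton _ a
  obtain hsmall | hlarge := lt_or_ge #U n₀
  · refine hasLargeIndepClique_of_rpow_le_two hU ?_
    have hle : #U ≤ 2 ^ (d + n₀ + 1) := by
      have := Nat.lt_two_pow_self (n := d + n₀ + 1)
      omega
    rw [one_div, Real.rpow_inv_le_iff_of_pos (by positivity) (by norm_num) (by positivity)]
    exact_mod_cast hle
  · obtain ⟨H, hH, q, L, hq, hUL, hfam⟩ := h U hlarge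
    have hL : 0 < L := Nat.pos_of_ne_zero fun hL => by
      rw [hL, mul_zero] at hUL
      omega
    have hdτ : (d : ℝ) * (1 / (d + n₀ + 1)) ≤ 1 := by
      rw [mul_one_div, div_le_one (by positivity)]
      linarith [Nat.cast_nonneg (α := ℝ) n₀]
    have hiff : ∀ T, HasLargeIndepClique H (1 / (d + n₀ + 1)) T ↔
        HasLargeIndepClique G (1 / (d + n₀ + 1)) T := by
      obtain rfl | rfl := hH
      · exact fun _ => .rfl
      · exact fun _ => hasLargeIndepClique_compl
    exact (hiff U).1 (hfam.hasLargeIndepClique (by positivity) hdτ hq hL hUL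
      fun T hTU => (hiff T).2 (ih T hTU))

theorem HasLargeIndepClique.rpow_half_le_max [Fintype V] {τ : ℝ}
    (h : HasLargeIndepClique G τ univ) :
    (Fintype.card V : ℝ) ^ (τ / 2) ≤ (max (alphaNum G) (omegaNum G) : ℕ) := by
  obtain ⟨W, -, K, -, hW, hK, hle⟩ := h
  set M := max (alphaNum G) (omegaNum G)
  have hWM : #W ≤ M := ((isClique_compl G).2 hW).card_le_cliqueNum.trans (le_max_left _ _)
  have hKM : #K ≤ M := hK.card_le_cliqueNum.trans (le_max_right _ _)
  refine le_of_sq_le_sq ?_ (Nat.cast_nonneg M)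
  calc ((Fintype.card V : ℝ) ^ (τ / 2)) ^ 2 = (#(univ : Finset V) : ℝ) ^ τ := by
        rw [← Real.rpow_mul_natCast (by positivity), card_univ]
        congr 1
        push_cast
        ring
    _ ≤ #W * #K := hle
    _ ≤ (M : ℝ) ^ 2 := by rw [sq]; gcongr

end

/-- `{C₇, C̄₇}` has the Erdős–Hajnal property. -/
theorem stmt_3 :
    ∃ τ : ℝ, 0 < τ ∧
      ∀ (V : Type) [Fintype V] (G : SimpleGraph V),
        ¬ Nonempty (cycleGraph 7 ↪g G) →
        ¬ Nonempty ((cycleGraph 7)ᶜ ↪g G) →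
        (Fintype.card V : ℝ) ^ τ ≤ ((max (alphaNum G) (omegaNum G) : ℕ) : ℝ) := by
  obtain ⟨d, n₀, hfam⟩ := exists_forall_hasAnticompleteFamily.{0}
  refine ⟨1 / (d + n₀ + 1) / 2, by positivity, fun V _ G hG hGc => ?_⟩
  have hGc' : C7Free Gᶜ := fun h => hGc (compl_compl G ▸ h.compl)
  exact (hasLargeIndepClique_of_forall_hasAnticompleteFamily (hfam V G hG hGc')
    Finset.univ).rpow_half_le_max
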